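/- arXiv:2306.04230 — 2 statements merged into one kernel-verified Lean document; each statement's English description precedes it below -/
import Mathlib

section
/- For the sequences generated by Algorithm 2, for every i ∈ I one has lim_{n→∞} ‖z_n − y_n^{(i)}‖ = 0, lim_{n→∞} ‖x_n − y_n^{(i)}‖ = 0, and lim_{n→∞} ‖T_i(x_n) − x_n‖ = 0. -/
open Filter Topology

/-!
For `λ ≤ 2 / K` the forward step `v ↦ v - λ ∇h(v)` of a convex function with `K`-Lipschitz gradient
is nonexpansive, and so is the proximal map. Two consecutive steps of the algorithm therefore
satisfy `‖x_{n+2} - x_{n+1}‖ ≤ (1 - α_{n+1}) ‖x_{n+1} - x_n‖ + o(α_n)`: inertia, memory of old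
directions and change of the step size `λ_n` are all of lower order than the anchoring `α_n`. As
`∑ α_n = ∞`, Xu's lemma gives `‖x_{n+1} - x_n‖ → 0`.

On the other hand, firm nonexpansiveness of `T_i` and the proximal inequality show that one step
decreases the squared distance to a common fixed point by the weighted sum of
`‖z_n - y_n^{(i)}‖² + ‖y_n^{(i)} - T_i y_n^{(i)}‖²`, up to an error `O(α_n + λ_n)`. By the first
part this decrease tends to zero, hence so do the residuals.
-/

open Asymptotics

section Sequences

lemma tendsto_prod_range_one_sub_zero {α : ℕ → ℝ} (hα₀ : ∀ n, 0 ≤ α n) (hα₁ : ∀ n, α n ≤ 1)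
    (hα : ¬ Summable α) :
    Tendsto (fun n => ∏ i ∈ Finset.range n, (1 - α i)) atTop (𝓝 0) := by
  have hexp : Tendsto (fun n => Real.exp (-∑ i ∈ Finset.range n, α i)) atTop (𝓝 0) :=
    Real.tendsto_exp_neg_atTop_nhds_zero.comp
      ((not_summable_iff_tendsto_nat_atTop_of_nonneg hα₀).1 hα)
  refine squeeze_zero (fun n => Finset.prod_nonneg fun i _ => sub_nonneg.2 (hα₁ i)) (fun n => ?_)
    hexp
  rw [← Finset.sum_neg_distrib, Real.exp_sum]
  exact Finset.prod_le_prod (fun i _ => sub_nonneg.2 (hα₁ i))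
    fun i _ => Real.one_sub_le_exp_neg (α i)

lemma tendsto_zero_of_succ_le_one_sub_mul_add {a α e : ℕ → ℝ} (ha : ∀ n, 0 ≤ a n)
    (hα₀ : ∀ n, 0 ≤ α n) (hα₁ : ∀ n, α n ≤ 1) (hα : ¬ Summable α) (he : e =o[atTop] α)
    (hrec : ∀ᶠ n in atTop, a (n + 1) ≤ (1 - α n) * a n + e n) :
    Tendsto a atTop (𝓝 0) := by
  refine tendsto_order.2 ⟨fun b hb => .of_forall fun n => hb.trans_le (ha n), fun ε hε => ?_⟩
  obtain ⟨N, hN⟩ := eventually_atTop.1 (hrec.and (he.def (half_pos hε)))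
  have hdecay : ∀ k, a (k + N) - ε / 2
      ≤ (a N - ε / 2) * ∏ i ∈ Finset.range k, (1 - α (i + N)) := by
    intro k
    have := discrete_gronwall_prod_general (u := fun k => a (k + N) - ε / 2) (b := fun _ => 0)
      (c := fun k => 1 - α (k + N)) (n₀ := 0) (fun k _ => ?_)
      (fun k _ => sub_nonneg.2 (hα₁ (k + N))) k.zero_le
    · simpa using this
    · obtain ⟨hstep, herr⟩ := hN (k + N) (Nat.le_add_left N k)
      rw [Real.norm_of_nonneg (hα₀ _)] at herr
      rw [add_right_comm]
      linarith [le_of_abs_le herr]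
  have hlim : Tendsto (fun k => ε / 2 + (a N - ε / 2) * ∏ i ∈ Finset.range k, (1 - α (i + N)))
      atTop (𝓝 (ε / 2)) := by
    simpa using ((tendsto_prod_range_one_sub_zero (fun n => hα₀ (n + N)) (fun n => hα₁ (n + N))
      (mt (summable_nat_add_iff N).1 hα)).const_mul (a N - ε / 2)).const_add (ε / 2)
  rw [← map_add_atTop_eq_nat N, eventually_map]
  filter_upwards [hlim.eventually_lt_const (half_lt_self hε)] with k hk
  linarith [hdecay k]

variable {E F X : Type*} [SeminormedAddCommGroup E] [SeminormedAddCommGroup F] {l : Filter X}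

lemma isBigO_one_of_succ_eq_add_smul [NormedSpace ℝ E] {v c : ℕ → E} {β : ℕ → ℝ}
    (hβ : Tendsto β atTop (𝓝 0)) (hc : c =O[atTop] fun _ => (1 : ℝ))
    (hv : ∀ᶠ n in atTop, v (n + 1) = c n + β n • v n) :
    v =O[atTop] fun _ => (1 : ℝ) := by
  obtain ⟨C, hC⟩ := hc.bound
  have hβ' : ∀ᶠ n in atTop, ‖β n‖ < 1 / 2 := by
    simpa using hβ.norm.eventually_lt_const (by norm_num : ‖(0 : ℝ)‖ < 1 / 2)
  obtain ⟨N, hN⟩ := eventually_atTop.1 (hv.and (hC.and hβ'))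
  refine .of_bound (max ‖v N‖ (2 * C)) (eventually_atTop.2 ⟨N, fun n hn => ?_⟩)
  rw [norm_one, mul_one]
  induction n, hn using Nat.le_induction with
  | base => exact le_max_left _ _
  | succ n hn ih =>
    obtain ⟨hrec, hcn, hβn⟩ := hN n hn
    rw [norm_one, mul_one] at hcn
    calc ‖v (n + 1)‖ ≤ ‖c n‖ + ‖β n‖ * ‖v n‖ := by
          rw [hrec, ← norm_smul]; exact norm_add_le _ _
      _ ≤ C + 1 / 2 * max ‖v N‖ (2 * C) := by gcongr
      _ ≤ max ‖v N‖ (2 * C) := by linarith [le_max_right ‖v N‖ (2 * C)]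

lemma isBigO_one_comp_of_lipschitzWith {K : NNReal} {φ : E → F} (hφ : LipschitzWith K φ)
    {v : X → E} (hv : v =O[l] fun _ => (1 : ℝ)) :
    (fun n => φ (v n)) =O[l] fun _ => (1 : ℝ) := by
  have hdiff : (fun n => φ (v n) - φ 0) =O[l] v :=
    .of_bound K (.of_forall fun n => by simpa using hφ.norm_sub_le (v n) 0)
  simpa using (hdiff.trans hv).add (isBigO_const_const (φ 0) one_ne_zero l)

lemma norm_map_sub_self_le {T : E → E} (hT : LipschitzWith 1 T) (x y : E) :
    ‖T x - x‖ ≤ 2 * ‖x - y‖ + ‖y - T y‖ := by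
  have hmap : ‖T x - T y‖ ≤ ‖x - y‖ := by simpa using hT.norm_sub_le x y
  calc ‖T x - x‖ = ‖(T x - T y) - (y - T y) - (x - y)‖ := by congr 1; abel
    _ ≤ ‖T x - T y‖ + ‖y - T y‖ + ‖x - y‖ :=
        (norm_sub_le _ _).trans (by gcongr; exact norm_sub_le _ _)
    _ ≤ 2 * ‖x - y‖ + ‖y - T y‖ := by linarith

lemma isBigO_one_inner [InnerProductSpace ℝ E] {v w : X → E} (hv : v =O[l] fun _ => (1 : ℝ))
    (hw : w =O[l] fun _ => (1 : ℝ)) : (fun n => inner ℝ (v n) (w n)) =O[l] fun _ => (1 : ℝ) := by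
  have hnorm : (fun n => inner ℝ (v n) (w n)) =O[l] fun n => ‖v n‖ * ‖w n‖ :=
    isBigO_of_le l fun n => by simpa using norm_inner_le_norm (𝕜 := ℝ) (v n) (w n)
  simpa using hnorm.trans (hv.norm_left.mul hw.norm_left)

lemma tendsto_mul_const_add_inner [InnerProductSpace ℝ E] {t : X → ℝ} {v w : X → E}
    (ht : Tendsto t l (𝓝 0)) (c : ℝ) (hv : v =O[l] fun _ => (1 : ℝ))
    (hw : w =O[l] fun _ => (1 : ℝ)) :
    Tendsto (fun n => t n * (c + inner ℝ (v n) (w n))) l (𝓝 0) := by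
  refine (isLittleO_one_iff ℝ).1 ?_
  simpa using ((isLittleO_one_iff ℝ).2 ht).mul_isBigO
    ((isBigO_const_const c one_ne_zero l).add (isBigO_one_inner hv hw))

lemma tendsto_norm_sq_sub_norm_sq {v w : X → E} (hv : v =O[l] fun _ => (1 : ℝ))
    (hw : w =O[l] fun _ => (1 : ℝ)) (hvw : Tendsto (fun n => v n - w n) l (𝓝 0)) :
    Tendsto (fun n => ‖v n‖ ^ 2 - ‖w n‖ ^ 2) l (𝓝 0) := by
  have hdiff : (fun n => ‖v n‖ - ‖w n‖) =o[l] fun _ => (1 : ℝ) :=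
    (isBigO_of_le l fun n => abs_norm_sub_norm_le (v n) (w n)).trans_isLittleO
      ((isLittleO_one_iff ℝ).2 hvw)
  refine (isLittleO_one_iff ℝ).1 ?_
  simpa [sq_sub_sq] using (hv.norm_left.add hw.norm_left).mul_isLittleO hdiff

lemma tendsto_norm_zero_of_norm_sq_add_norm_sq {v : X → E} {w : X → F}
    (h : Tendsto (fun n => ‖v n‖ ^ 2 + ‖w n‖ ^ 2) l (𝓝 0)) :
    Tendsto (fun n => ‖v n‖) l (𝓝 0) ∧ Tendsto (fun n => ‖w n‖) l (𝓝 0) := by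
  have hsqrt := h.sqrt
  rw [Real.sqrt_zero] at hsqrt
  exact ⟨squeeze_zero (fun n => norm_nonneg _)
      (fun n => Real.le_sqrt_of_sq_le (le_add_of_nonneg_right (sq_nonneg _))) hsqrt,
    squeeze_zero (fun n => norm_nonneg _)
      (fun n => Real.le_sqrt_of_sq_le (le_add_of_nonneg_left (sq_nonneg _))) hsqrt⟩

lemma isBigO_one_of_succ {v : ℕ → E} (hv : (fun n => v (n + 1)) =O[atTop] fun _ => (1 : ℝ)) :
    v =O[atTop] fun _ => (1 : ℝ) := by
  rw [← map_add_atTop_eq_nat 1]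
  exact isBigO_map.2 hv

lemma tendsto_norm_sub_sq_sub_norm_succ_sub_sq {x z : ℕ → E} (s : E)
    (hx : x =O[atTop] fun _ => (1 : ℝ))
    (hzx : Tendsto (fun n => z n - x n) atTop (𝓝 0))
    (hx_succ : Tendsto (fun n => ‖x (n + 1) - x n‖) atTop (𝓝 0)) :
    Tendsto (fun n => ‖z n - s‖ ^ 2 - ‖x (n + 1) - s‖ ^ 2) atTop (𝓝 0) := by
  have hs := isBigO_const_const s (one_ne_zero (α := ℝ)) (atTop : Filter ℕ)
  have hz : z =O[atTop] fun _ => (1 : ℝ) := by simpa using (hzx.isBigO_one ℝ).add hx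
  refine tendsto_norm_sq_sub_norm_sq (hz.sub hs)
    ((hx.comp_tendsto (tendsto_add_atTop_nat 1)).sub hs) ?_
  simpa using hzx.sub (tendsto_zero_iff_norm_tendsto_zero.2 hx_succ)

lemma norm_anchor_succ_sub_le [NormedSpace ℝ E] {u t t' : E} {a a' : ℝ} (ha' : a' ≤ 1) :
    ‖(a' • u + (1 - a') • t') - (a • u + (1 - a) • t)‖
      ≤ (1 - a') * ‖t' - t‖ + |a' - a| * ‖u - t‖ :=
  calc ‖(a' • u + (1 - a') • t') - (a • u + (1 - a) • t)‖
      = ‖(1 - a') • (t' - t) + (a' - a) • (u - t)‖ := by congr 1; module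
    _ ≤ (1 - a') * ‖t' - t‖ + |a' - a| * ‖u - t‖ := by
        refine (norm_add_le _ _).trans_eq ?_
        rw [norm_smul, norm_smul, Real.norm_of_nonneg (sub_nonneg.2 ha'), Real.norm_eq_abs]

lemma exists_norm_anchor_succ_sub_le [NormedSpace ℝ E] {S : E → E} {v : ℕ → E} {p : E}
    {α : ℕ → ℝ} (hS : LipschitzWith 1 S) (hα₀ : ∀ n, 0 ≤ α n) (hα₁ : ∀ n, α n ≤ 1)
    (hα_diff : (fun n => α (n + 1) - α n) =o[atTop] α) (hv : v =O[atTop] fun _ => (1 : ℝ))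
    {b : ℕ → ℝ} (hv_succ : ∃ e : ℕ → ℝ, e =o[atTop] α ∧
      ∀ᶠ n in atTop, ‖v (n + 1) - v n‖ ≤ b n + e n) :
    ∃ e : ℕ → ℝ, e =o[atTop] α ∧ ∀ᶠ n in atTop,
      ‖(α (n + 1) • p + (1 - α (n + 1)) • S (v (n + 1))) - (α n • p + (1 - α n) • S (v n))‖
        ≤ (1 - α (n + 1)) * b n + e n := by
  obtain ⟨e, he, hle⟩ := hv_succ
  have hbdd : (fun n => p - S (v n)) =O[atTop] fun _ => (1 : ℝ) :=
    (isBigO_const_const p one_ne_zero atTop).sub (isBigO_one_comp_of_lipschitzWith hS hv)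
  have hanchor : (fun n => |α (n + 1) - α n| * ‖p - S (v n)‖) =o[atTop] α := by
    simpa using hα_diff.abs_left.mul_isBigO hbdd.norm_left
  refine ⟨_, he.norm_left.add hanchor, hle.mono fun n hn => ?_⟩
  have hS_succ : ‖S (v (n + 1)) - S (v n)‖ ≤ b n + e n := by
    simpa using (hS.norm_sub_le (v (n + 1)) (v n)).trans ((one_mul _).trans_le hn)
  have hcontract := mul_le_mul_of_nonneg_left hS_succ (sub_nonneg.2 (hα₁ (n + 1)))
  have herror : (1 - α (n + 1)) * e n ≤ ‖e n‖ :=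
    calc (1 - α (n + 1)) * e n ≤ (1 - α (n + 1)) * ‖e n‖ :=
          mul_le_mul_of_nonneg_left (le_abs_self _) (sub_nonneg.2 (hα₁ (n + 1)))
      _ ≤ ‖e n‖ := mul_le_of_le_one_left (norm_nonneg _) (sub_le_self 1 (hα₀ (n + 1)))
  linarith [norm_anchor_succ_sub_le (u := p) (t := S (v n)) (t' := S (v (n + 1))) (a := α n)
    (hα₁ (n + 1))]

end Sequences

section InnerProductSpace

variable {H : Type*} [NormedAddCommGroup H] [InnerProductSpace ℝ H]

/-- Firm nonexpansiveness, in the inner product form. -/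
def IsFirmlyNonexpansive (T : H → H) : Prop :=
  ∀ x y, ‖T x - T y‖ ^ 2 ≤ inner ℝ (T x - T y) (x - y)

namespace IsFirmlyNonexpansive

variable {T : H → H}

lemma lipschitzWith (hT : IsFirmlyNonexpansive T) : LipschitzWith 1 T := by
  refine .of_dist_le_mul fun x y => ?_
  rw [NNReal.coe_one, one_mul, dist_eq_norm, dist_eq_norm]
  by_contra! hlt
  nlinarith [(hT x y).trans (real_inner_le_norm _ _), norm_nonneg (x - y)]

lemma norm_sub_sq_add_norm_sub_sq_le (hT : IsFirmlyNonexpansive T) {s : H} (hs : T s = s) (y : H) :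
    ‖T y - s‖ ^ 2 + ‖y - T y‖ ^ 2 ≤ ‖y - s‖ ^ 2 := by
  have hfirm := hT y s
  rw [hs] at hfirm
  rw [← sub_sub_sub_cancel_right y (T y) s, norm_sub_sq_real (y - s), real_inner_comm]
  linarith

end IsFirmlyNonexpansive

/-- `p` is the proximal point `prox_{l f}(v)`. It is a relation rather than a function, so that
existence and uniqueness of the minimizer play no role. -/
def IsProxAt (f : H → ℝ) (l : ℝ) (v p : H) : Prop :=
  ∀ u, f p + (1 / (2 * l)) * ‖v - p‖ ^ 2 ≤ f u + (1 / (2 * l)) * ‖v - u‖ ^ 2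

lemma isProxAt_of_inner_sub_le {f : H → ℝ} {l : ℝ} {v p : H} (hl : 0 < l)
    (hp : ∀ u, inner ℝ (v - p) (u - p) ≤ l * (f u - f p)) : IsProxAt f l v p := by
  intro u
  have hinner : inner ℝ (v - p) (u - p) / l ≤ f u - f p := (div_le_iff₀' hl).2 (hp u)
  have hexpand : 1 / (2 * l) * ‖v - u‖ ^ 2
      = 1 / (2 * l) * ‖v - p‖ ^ 2 - inner ℝ (v - p) (u - p) / l
        + 1 / (2 * l) * ‖u - p‖ ^ 2 := by
    rw [← sub_sub_sub_cancel_right v u p, norm_sub_sq_real]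
    field
  have : 0 ≤ 1 / (2 * l) * ‖u - p‖ ^ 2 := by positivity
  linarith

namespace IsProxAt

variable {f : H → ℝ} {l m : ℝ} {v w p q : H}

lemma inner_sub_le_add_mul (hp : IsProxAt f l v p) (hf : ConvexOn ℝ Set.univ f) (hl : 0 < l)
    (u : H) {t : ℝ} (ht₀ : 0 < t) (ht₁ : t ≤ 1) :
    inner ℝ (v - p) (u - p) ≤ l * (f u - f p) + t * (‖u - p‖ ^ 2 / 2) := by
  have hmin := hp ((1 - t) • p + t • u)
  have hconv : f ((1 - t) • p + t • u) ≤ (1 - t) * f p + t * f u :=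
    hf.2 (Set.mem_univ p) (Set.mem_univ u) (sub_nonneg.2 ht₁) ht₀.le (sub_add_cancel 1 t)
  have hsegment : v - ((1 - t) • p + t • u) = (v - p) - t • (u - p) := by module
  rw [hsegment, norm_sub_sq_real (v - p), inner_smul_right, norm_smul, mul_pow,
    Real.norm_of_nonneg ht₀.le] at hmin
  have hscaled : 1 / (2 * l) * (2 * (t * inner ℝ (v - p) (u - p)))
      ≤ t * (f u - f p) + 1 / (2 * l) * (t ^ 2 * ‖u - p‖ ^ 2) := by linarith
  field_simp at hscaled
  linarith

/-- Minimality against the point `p + t (u - p)` of the segment, as `t → 0`. -/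
lemma inner_sub_le (hp : IsProxAt f l v p) (hf : ConvexOn ℝ Set.univ f) (hl : 0 < l) (u : H) :
    inner ℝ (v - p) (u - p) ≤ l * (f u - f p) := by
  have hlim : Tendsto (fun t : ℝ => l * (f u - f p) + t * (‖u - p‖ ^ 2 / 2)) (𝓝[>] 0)
      (𝓝 (l * (f u - f p))) :=
    tendsto_nhdsWithin_of_tendsto_nhds (Continuous.tendsto' (by fun_prop) _ _ (by simp))
  refine ge_of_tendsto hlim ?_
  filter_upwards [Ioc_mem_nhdsGT one_pos] with t ht
  exact hp.inner_sub_le_add_mul hf hl u ht.1 ht.2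

/-- The resolvent identity `prox_{l f}(v) = prox_{m f}(p + (m / l) (v - p))`. -/
lemma rescale (hp : IsProxAt f l v p) (hf : ConvexOn ℝ Set.univ f) (hl : 0 < l) (hm : 0 < m) :
    IsProxAt f m (p + (m / l) • (v - p)) p := by
  refine isProxAt_of_inner_sub_le hm fun u => ?_
  rw [add_sub_cancel_left, real_inner_smul_left]
  calc m / l * inner ℝ (v - p) (u - p) ≤ m / l * (l * (f u - f p)) := by
        gcongr; exact hp.inner_sub_le hf hl u
    _ = m * (f u - f p) := by field

lemma norm_sub_le (hp : IsProxAt f l v p) (hq : IsProxAt f l w q) (hf : ConvexOn ℝ Set.univ f)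
    (hl : 0 < l) : ‖q - p‖ ≤ ‖w - v‖ := by
  have hsq : ‖q - p‖ ^ 2 ≤ inner ℝ (w - v) (q - p) := by
    have hpq := hp.inner_sub_le hf hl q
    have hqp := hq.inner_sub_le hf hl p
    rw [← neg_sub q p, inner_neg_right] at hqp
    rw [show w - v = (w - q) - (v - p) + (q - p) by abel, inner_add_left, inner_sub_left,
      real_inner_self_eq_norm_sq]
    linarith
  by_contra! hlt
  nlinarith [hsq.trans (real_inner_le_norm _ _), norm_nonneg (w - v)]

lemma norm_sub_le_of_forward_step (hf : ConvexOn ℝ Set.univ f) (hl : 0 < l) (hm : 0 < m)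
    {g : H → H} (hg : LipschitzWith 1 fun x => x - m • g x) {z z' e e' : H}
    (hp : IsProxAt f l (z + l • (-g z + e)) p) (hq : IsProxAt f m (z' + m • (-g z' + e')) q) :
    ‖q - p‖ ≤ ‖z' - z‖ + m * ‖e' - e‖ + |1 - m / l| * ‖z - p‖ := by
  have hforward : ‖(z' - m • g z') - (z - m • g z)‖ ≤ ‖z' - z‖ := by
    simpa using hg.norm_sub_le z' z
  have hsplit : z' + m • (-g z' + e') - (p + (m / l) • (z + l • (-g z + e) - p))
      = (z' - m • g z') - (z - m • g z) + m • (e' - e) + (1 - m / l) • (z - p) := by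
    match_scalars <;> field
  calc ‖q - p‖ ≤ ‖(z' - m • g z') - (z - m • g z) + m • (e' - e) + (1 - m / l) • (z - p)‖ :=
        hsplit ▸ (hp.rescale hf hl hm).norm_sub_le hq hf hm
    _ ≤ ‖(z' - m • g z') - (z - m • g z)‖ + ‖m • (e' - e)‖ + ‖(1 - m / l) • (z - p)‖ :=
        norm_add₃_le
    _ ≤ ‖z' - z‖ + m * ‖e' - e‖ + |1 - m / l| * ‖z - p‖ := by
        rw [norm_smul, norm_smul, Real.norm_of_nonneg hm.le, Real.norm_eq_abs]
        gcongr

lemma norm_sub_sq_add_norm_sub_sq_le {z d : H} (hp : IsProxAt f l (z + l • d) p)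
    (hf : ConvexOn ℝ Set.univ f) (hl : 0 < l) (s : H) :
    ‖p - s‖ ^ 2 + ‖z - p‖ ^ 2 ≤ ‖z - s‖ ^ 2 + 2 * l * (f s - f p + inner ℝ d (p - s)) := by
  have hinner := hp.inner_sub_le hf hl s
  rw [add_sub_right_comm, inner_add_left, real_inner_smul_left, ← neg_sub p s, inner_neg_right,
    inner_neg_right] at hinner
  rw [← sub_add_sub_cancel z p s, norm_add_sq_real]
  linarith

/-- A single proximal point provides an affine minorant of `f`. -/
lemma isBoundedUnder_ge_comp (hp : IsProxAt f l v p) (hf : ConvexOn ℝ Set.univ f) (hl : 0 < l)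
    {X : Type*} {𝓕 : Filter X} {y : X → H} (hy : y =O[𝓕] fun _ => (1 : ℝ)) :
    IsBoundedUnder (· ≥ ·) 𝓕 fun n => f (y n) := by
  have hdiff : (fun n => y n - p) =O[𝓕] fun _ => (1 : ℝ) :=
    hy.sub (isBigO_const_const p one_ne_zero 𝓕)
  obtain ⟨C, hC⟩ := hdiff.bound
  refine ⟨f p + -(‖v - p‖ * C) / l, eventually_map.2 (hC.mono fun n hn => ?_)⟩
  rw [norm_one, mul_one] at hn
  have hlower : -(‖v - p‖ * C) ≤ l * (f (y n) - f p) :=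
    calc -(‖v - p‖ * C) ≤ -(‖v - p‖ * ‖y n - p‖) := by gcongr
      _ ≤ inner ℝ (v - p) (y n - p) := neg_le_of_abs_le (abs_real_inner_le_norm _ _)
      _ ≤ l * (f (y n) - f p) := hp.inner_sub_le hf hl (y n)
  linarith [(div_le_iff₀' hl).2 hlower]

end IsProxAt

section Gradient

variable {h : H → ℝ} {h' : H → H}

lemma hasDerivAt_comp_lineMap (hgrad : ∀ x, HasFDerivAt h (innerSL ℝ (h' x)) x) (x y : H) (t : ℝ) :
    HasDerivAt (fun t : ℝ => h (AffineMap.lineMap x y t))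
      (inner ℝ (h' (AffineMap.lineMap x y t)) (y - x)) t :=
  (hgrad _).comp_hasDerivAt t AffineMap.hasDerivAt_lineMap

lemma add_inner_le_of_convexOn (hconv : ConvexOn ℝ Set.univ h)
    (hgrad : ∀ x, HasFDerivAt h (innerSL ℝ (h' x)) x) (x y : H) :
    h x + inner ℝ (h' x) (y - x) ≤ h y := by
  have hline : ConvexOn ℝ Set.univ (fun t : ℝ => h (AffineMap.lineMap x y t)) :=
    hconv.comp_affineMap (AffineMap.lineMap x y : ℝ →ᵃ[ℝ] H)
  have hslope := hline.le_slope_of_hasDerivAt (Set.mem_univ 0) (Set.mem_univ 1) one_pos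
    (hasDerivAt_comp_lineMap hgrad x y 0)
  simp only [slope_def_field, AffineMap.lineMap_apply_zero, AffineMap.lineMap_apply_one, sub_zero,
    div_one] at hslope
  linarith

lemma le_add_inner_add_of_lipschitzWith {K : NNReal} (hlip : LipschitzWith K h')
    (hgrad : ∀ x, HasFDerivAt h (innerSL ℝ (h' x)) x) (x y : H) :
    h y ≤ h x + inner ℝ (h' x) (y - x) + K / 2 * ‖y - x‖ ^ 2 := by
  have hderiv := hasDerivAt_comp_lineMap hgrad x y
  have hquad (t : ℝ) : HasDerivAt
      (fun t : ℝ => h x + t * inner ℝ (h' x) (y - x) + K / 2 * ‖y - x‖ ^ 2 * t ^ 2)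
      (inner ℝ (h' x) (y - x) + K * ‖y - x‖ ^ 2 * t) t :=
    ((((hasDerivAt_id t).mul_const _).const_add (h x)).add
      ((hasDerivAt_pow 2 t).const_mul _)).congr_deriv (by norm_num; ring)
  have hle := image_le_of_deriv_right_le_deriv_boundary (a := 0) (b := 1)
    (fun t _ => (hderiv t).continuousAt.continuousWithinAt)
    (fun t _ => (hderiv t).hasDerivWithinAt) (by simp)
    (fun t _ => (hquad t).continuousAt.continuousWithinAt)
    (fun t _ => (hquad t).hasDerivWithinAt) ?_ (Set.right_mem_Icc.2 zero_le_one)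
  · simpa using hle
  · intro t ht
    have hgrowth : ‖h' (AffineMap.lineMap x y t) - h' x‖ ≤ K * (t * ‖y - x‖) := by
      simpa [AffineMap.lineMap_apply, norm_smul, abs_of_nonneg ht.1] using
        hlip.norm_sub_le (AffineMap.lineMap x y t) x
    have hinner := real_inner_le_norm (h' (AffineMap.lineMap x y t) - h' x) (y - x)
    rw [inner_sub_left] at hinner
    nlinarith [mul_le_mul_of_nonneg_right hgrowth (norm_nonneg (y - x))]

/-- The choice `t = 1 / K` gives the Baillon–Haddad inequality; leaving `t` free avoids a division
and a case distinction on `K = 0`. -/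
lemma mul_norm_gradient_sub_sq_le {K : NNReal} (hlip : LipschitzWith K h')
    (hgrad : ∀ x, HasFDerivAt h (innerSL ℝ (h' x)) x) (hconv : ConvexOn ℝ Set.univ h)
    (t : ℝ) (x y : H) :
    (t - K / 2 * t ^ 2) * ‖h' y - h' x‖ ^ 2 ≤ h y - h x - inner ℝ (h' x) (y - x) := by
  have hlower := add_inner_le_of_convexOn hconv hgrad x (y - t • (h' y - h' x))
  have hupper := le_add_inner_add_of_lipschitzWith hlip hgrad y (y - t • (h' y - h' x))
  have hself : inner ℝ (h' y) (h' y - h' x) - inner ℝ (h' x) (h' y - h' x)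
      = ‖h' y - h' x‖ ^ 2 := by rw [← inner_sub_left, real_inner_self_eq_norm_sq]
  rw [sub_right_comm, inner_sub_right, inner_smul_right] at hlower
  rw [sub_sub_cancel_left, inner_neg_right, inner_smul_right, norm_neg, norm_smul, mul_pow,
    Real.norm_eq_abs, sq_abs] at hupper
  linear_combination hlower + hupper - t * hself

lemma lipschitzWith_one_sub_smul_gradient {K : NNReal} (hlip : LipschitzWith K h')
    (hgrad : ∀ x, HasFDerivAt h (innerSL ℝ (h' x)) x) (hconv : ConvexOn ℝ Set.univ h)
    {l : ℝ} (hl : 0 ≤ l) (hlK : l * K ≤ 2) : LipschitzWith 1 fun x => x - l • h' x := by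
  refine .of_dist_le_mul fun x y => ?_
  rw [NNReal.coe_one, one_mul, dist_eq_norm, dist_eq_norm]
  have hxy := mul_norm_gradient_sub_sq_le hlip hgrad hconv (l / 2) x y
  have hyx := mul_norm_gradient_sub_sq_le hlip hgrad hconv (l / 2) y x
  have hcoco : l / 2 * ‖h' x - h' y‖ ^ 2 ≤ inner ℝ (x - y) (h' x - h' y) := by
    rw [norm_sub_rev, ← neg_sub x y, inner_neg_right] at hxy
    rw [real_inner_comm, inner_sub_left]
    nlinarith [mul_nonneg (mul_nonneg hl (sub_nonneg.2 hlK)) (sq_nonneg ‖h' x - h' y‖)]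
  refine le_of_sq_le_sq ?_ (norm_nonneg _)
  rw [sub_sub_sub_comm, ← smul_sub, norm_sub_sq_real, inner_smul_right, norm_smul, mul_pow,
    Real.norm_of_nonneg hl]
  nlinarith [mul_le_mul_of_nonneg_left hcoco hl]

end Gradient

end InnerProductSpace

section StepSizes

variable {a lam α : ℕ → ℝ}

lemma isEquivalent_succ_of_tendsto (hlam : ∀ n, lam n ≠ 0) (hlam_lim : Tendsto lam atTop (𝓝 0))
    (h : Tendsto (fun n => (1 / lam (n + 1)) * |1 - α n / α (n + 1)|) atTop (𝓝 0)) :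
    (fun n => α (n + 1)) ~[atTop] α := by
  have hdiff : Tendsto (fun n => 1 - α n / α (n + 1)) atTop (𝓝 0) := by
    rw [tendsto_zero_iff_abs_tendsto_zero]
    have hmul := (hlam_lim.comp (tendsto_add_atTop_nat 1)).mul h
    rw [mul_zero] at hmul
    refine hmul.congr fun n => ?_
    simp [hlam]
  refine (isEquivalent_of_tendsto_one ?_).symm
  simpa [Pi.div_def] using hdiff.const_sub 1

lemma isLittleO_of_tendsto_div_succ (hα : ∀ n, α n ≠ 0)
    (hα_succ : (fun n => α (n + 1)) =O[atTop] α)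
    (h : Tendsto (fun n => a n / α (n + 1)) atTop (𝓝 0)) : a =o[atTop] α :=
  (isLittleO_of_tendsto (fun _ hn => absurd hn (hα _)) h).trans_isBigO hα_succ

lemma isLittleO_of_tendsto_div_mul_succ (hα : ∀ n, α n ≠ 0)
    (hα_succ : (fun n => α (n + 1)) =O[atTop] α) (hlam : ∀ n, lam n ≠ 0)
    (hlam_lim : Tendsto lam atTop (𝓝 0))
    (h : Tendsto (fun n => a n / (α (n + 1) * lam (n + 1))) atTop (𝓝 0)) : a =o[atTop] α := by
  refine isLittleO_of_tendsto_div_succ hα hα_succ ?_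
  have hmul := (hlam_lim.comp (tendsto_add_atTop_nat 1)).mul h
  rw [mul_zero] at hmul
  refine hmul.congr fun n => ?_
  have := hlam (n + 1)
  simp only [Function.comp_apply]
  field

lemma isLittleO_one_sub_div_of_tendsto (hα : ∀ n, α n ≠ 0)
    (hα_succ : (fun n => α (n + 1)) =O[atTop] α) (hlam : ∀ n, 0 < lam n)
    (hlam_lim : Tendsto lam atTop (𝓝 0))
    (h : Tendsto (fun n => (1 / α (n + 1)) * |1 / lam (n + 1) - 1 / lam n|) atTop (𝓝 0)) :
    (fun n => 1 - lam (n + 1) / lam n) =o[atTop] α := by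
  refine isLittleO_abs_left.1 (isLittleO_of_tendsto_div_succ hα hα_succ ?_)
  have hmul := (hlam_lim.comp (tendsto_add_atTop_nat 1)).mul h
  rw [mul_zero] at hmul
  refine hmul.congr fun n => ?_
  have hfactor : 1 - lam (n + 1) / lam n = lam (n + 1) * (1 / lam (n + 1) - 1 / lam n) := by
    have := (hlam n).ne'
    have := (hlam (n + 1)).ne'
    field
  rw [hfactor, abs_mul, abs_of_pos (hlam (n + 1)), Function.comp_apply]
  ring

end StepSizes

section Iteration

variable {H : Type*} [NormedAddCommGroup H] [InnerProductSpace ℝ H]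

lemma norm_anchor_sub_sq_add_le {T : H → H} {f : H → ℝ} {s u y z d : H} {a l : ℝ}
    (hT : IsFirmlyNonexpansive T) (hs : T s = s) (hf : ConvexOn ℝ Set.univ f) (hl : 0 < l)
    (hy : IsProxAt f l (z + l • d) y) (ha₀ : 0 ≤ a) (ha₁ : a ≤ 1) :
    ‖a • u + (1 - a) • T y - s‖ ^ 2 + (‖z - y‖ ^ 2 + ‖y - T y‖ ^ 2)
      ≤ ‖z - s‖ ^ 2 + (a * ‖u - s‖ ^ 2 + 2 * l * (f s - f y + inner ℝ d (y - s))) := by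
  have hconv : ‖a • u + (1 - a) • T y - s‖ ^ 2 ≤ a * ‖u - s‖ ^ 2 + (1 - a) * ‖T y - s‖ ^ 2 := by
    have hsq : ConvexOn ℝ Set.univ fun v : H => ‖v‖ ^ 2 :=
      convexOn_univ_norm.pow (fun v _ => norm_nonneg v) 2
    rw [show a • u + (1 - a) • T y - s = a • (u - s) + (1 - a) • (T y - s) by module]
    exact hsq.2 (Set.mem_univ _) (Set.mem_univ _) ha₀ (sub_nonneg.2 ha₁) (add_sub_cancel a 1)
  have hfix := hT.norm_sub_sq_add_norm_sub_sq_le hs y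
  have hprox := hy.norm_sub_sq_add_norm_sub_sq_le hf hl s
  linarith [mul_nonneg ha₀ (sq_nonneg ‖T y - s‖)]

variable {ι : Type*} [Fintype ι]

/-- The relations defining Algorithm 2, for an arbitrary finite index type and with weights `ω` in
place of `1 / M`. Here `g i` stands for `∇h_i`, and the auxiliary points `w_n^{(i+1)}` are
substituted into their average. -/
structure IsInertialProxIteration (ω : ι → ℝ) (f : ι → H → ℝ) (g T : ι → H → H) (u : ι → H)
    (θ lam β α : ℕ → ℝ) (x z : ℕ → H) (d y : ℕ → ι → H) : Prop where
  extrapolation : ∀ n ≥ 1, z n = x n + θ n • (x n - x (n - 1))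
  direction : ∀ n ≥ 1, ∀ i, d (n + 1) i = -g i (z n) + β n • d n i
  prox : ∀ n ≥ 1, ∀ i, IsProxAt (f i) (lam n) (z n + lam n • d (n + 1) i) (y n i)
  average : ∀ n ≥ 1, x (n + 1) = ∑ i, ω i • (α n • u i + (1 - α n) • T i (y n i))

namespace IsInertialProxIteration

variable {ω : ι → ℝ} {f : ι → H → ℝ} {g T : ι → H → H} {u : ι → H} {θ lam β α : ℕ → ℝ}
  {x z : ℕ → H} {d y : ℕ → ι → H}

lemma isBigO_iterate (hit : IsInertialProxIteration ω f g T u θ lam β α x z d y)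
    {K : ι → NNReal} (hT : ∀ i, LipschitzWith (K i) (T i)) (hα : Tendsto α atTop (𝓝 0))
    (hy : ∀ i, (fun n => y n i) =O[atTop] fun _ => (1 : ℝ)) : x =O[atTop] fun _ => (1 : ℝ) := by
  have hanchor (i : ι) : (fun n => α n • u i) =O[atTop] fun _ => (1 : ℝ) :=
    (hα.smul_const (u i)).isBigO_one ℝ
  have hmap (i : ι) : (fun n => (1 - α n) • T i (y n i)) =O[atTop] fun _ => (1 : ℝ) := by
    simpa using ((hα.const_sub 1).isBigO_one ℝ).smul
      (isBigO_one_comp_of_lipschitzWith (hT i) (hy i))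
  have haverage : (fun n => ∑ i, ω i • (α n • u i + (1 - α n) • T i (y n i)))
      =O[atTop] fun _ => (1 : ℝ) :=
    .fun_sum fun i _ => ((hanchor i).add (hmap i)).const_smul_left (ω i)
  exact isBigO_one_of_succ (haverage.congr'
    ((eventually_ge_atTop 1).mono fun n hn => (hit.average n hn).symm) .rfl)

lemma isLittleO_extrapolation_sub (hit : IsInertialProxIteration ω f g T u θ lam β α x z d y)
    (hx : x =O[atTop] fun _ => (1 : ℝ)) (hθ : θ =o[atTop] α) :
    (fun n => z n - x n) =o[atTop] α := by
  have hdiff : (fun n => x n - x (n - 1)) =O[atTop] fun _ => (1 : ℝ) :=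
    hx.sub (hx.comp_tendsto (tendsto_sub_atTop_nat 1))
  have hsmul : (fun n => θ n • (x n - x (n - 1))) =o[atTop] α := by
    simpa using hθ.smul_isBigO hdiff
  refine hsmul.congr' ((eventually_ge_atTop 1).mono fun n hn => ?_) .rfl
  simp [hit.extrapolation n hn]

lemma isBigO_direction (hit : IsInertialProxIteration ω f g T u θ lam β α x z d y) {i : ι}
    {K : NNReal} (hg : LipschitzWith K (g i)) (hβ : Tendsto β atTop (𝓝 0))
    (hz : z =O[atTop] fun _ => (1 : ℝ)) : (fun n => d n i) =O[atTop] fun _ => (1 : ℝ) :=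
  isBigO_one_of_succ_eq_add_smul hβ (isBigO_one_comp_of_lipschitzWith hg hz).neg_left
    ((eventually_ge_atTop 1).mono fun n hn => hit.direction n hn i)

lemma norm_prox_succ_sub_le (hit : IsInertialProxIteration ω f g T u θ lam β α x z d y) {i : ι}
    (hf : ConvexOn ℝ Set.univ (f i)) (hlam : ∀ n, 0 < lam n) {n : ℕ} (hn : 1 ≤ n)
    (hstep : LipschitzWith 1 fun v => v - lam (n + 1) • g i v) :
    ‖y (n + 1) i - y n i‖ ≤ ‖z (n + 1) - z n‖
      + lam (n + 1) * ‖β (n + 1) • d (n + 1) i - β n • d n i‖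
      + |1 - lam (n + 1) / lam n| * ‖z n - y n i‖ := by
  have hp := hit.prox n hn i
  have hq := hit.prox (n + 1) (Nat.le_add_left 1 n) i
  rw [hit.direction n hn] at hp
  rw [hit.direction (n + 1) (Nat.le_add_left 1 n)] at hq
  exact IsProxAt.norm_sub_le_of_forward_step hf (hlam n) (hlam (n + 1)) hstep hp hq

lemma exists_norm_prox_succ_sub_le (hit : IsInertialProxIteration ω f g T u θ lam β α x z d y)
    {i : ι} (hf : ConvexOn ℝ Set.univ (f i)) (hlam : ∀ n, 0 < lam n)
    (hlam_bdd : lam =O[atTop] fun _ => (1 : ℝ))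
    (hstep : ∀ᶠ n in atTop, LipschitzWith 1 fun v => v - lam n • g i v)
    (hα_succ : (fun n => α (n + 1)) =O[atTop] α) (hβ : β =o[atTop] α)
    (hratio : (fun n => 1 - lam (n + 1) / lam n) =o[atTop] α)
    (hzx : (fun n => z n - x n) =o[atTop] α)
    (hd : (fun n => d n i) =O[atTop] fun _ => (1 : ℝ))
    (hzy : (fun n => z n - y n i) =O[atTop] fun _ => (1 : ℝ)) :
    ∃ e : ℕ → ℝ, e =o[atTop] α ∧
      ∀ᶠ n in atTop, ‖y (n + 1) i - y n i‖ ≤ ‖x (n + 1) - x n‖ + e n := by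
  have hzx_succ : (fun n => z (n + 1) - x (n + 1)) =o[atTop] α :=
    (hzx.comp_tendsto (tendsto_add_atTop_nat 1)).trans_isBigO hα_succ
  have hmemory : (fun n => β n • d n i) =o[atTop] α := by simpa using hβ.smul_isBigO hd
  have hmemory_succ : (fun n => β (n + 1) • d (n + 1) i) =o[atTop] α :=
    (hmemory.comp_tendsto (tendsto_add_atTop_nat 1)).trans_isBigO hα_succ
  have hlam_succ : (fun n => lam (n + 1)) =O[atTop] fun _ => (1 : ℝ) :=
    hlam_bdd.comp_tendsto (tendsto_add_atTop_nat 1)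
  have hdirection : (fun n => lam (n + 1) * ‖β (n + 1) • d (n + 1) i - β n • d n i‖)
      =o[atTop] α := by
    simpa using hlam_succ.mul_isLittleO (hmemory_succ.sub hmemory).norm_left
  have hrescale : (fun n => |1 - lam (n + 1) / lam n| * ‖z n - y n i‖) =o[atTop] α := by
    simpa using hratio.abs_left.mul_isBigO hzy.norm_left
  refine ⟨_, ((hzx_succ.norm_left.add hzx.norm_left).add hdirection).add hrescale, ?_⟩
  filter_upwards [(tendsto_add_atTop_nat 1).eventually hstep, eventually_ge_atTop 1] with n hsn hn
  have hprox := hit.norm_prox_succ_sub_le hf hlam hn hsn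
  have hz : ‖z (n + 1) - z n‖
      ≤ ‖z (n + 1) - x (n + 1)‖ + ‖x (n + 1) - x n‖ + ‖z n - x n‖ := by
    rw [norm_sub_rev (z n), show z (n + 1) - z n
      = (z (n + 1) - x (n + 1)) + (x (n + 1) - x n) + (x n - z n) by abel]
    exact norm_add₃_le
  linarith

lemma exists_norm_succ_sub_le (hit : IsInertialProxIteration ω f g T u θ lam β α x z d y)
    (hω : ∀ i, 0 ≤ ω i) (hω_sum : ∑ i, ω i = 1) {b : ℕ → ℝ}
    (hanchor : ∀ i, ∃ e : ℕ → ℝ, e =o[atTop] α ∧ ∀ᶠ n in atTop,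
      ‖(α (n + 1) • u i + (1 - α (n + 1)) • T i (y (n + 1) i))
        - (α n • u i + (1 - α n) • T i (y n i))‖ ≤ b n + e n) :
    ∃ e : ℕ → ℝ, e =o[atTop] α ∧ ∀ᶠ n in atTop, ‖x (n + 2) - x (n + 1)‖ ≤ b n + e n := by
  choose e he hle using hanchor
  refine ⟨fun n => ∑ i, ω i * e i n, .fun_sum fun i _ => (he i).const_mul_left (ω i), ?_⟩
  filter_upwards [eventually_all.2 hle, eventually_ge_atTop 1] with n hn hn₁
  rw [hit.average n hn₁, hit.average (n + 1) (Nat.le_add_left 1 n), ← Finset.sum_sub_distrib]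
  calc _ ≤ ∑ i, ω i * (b n + e i n) := by
        refine (norm_sum_le _ _).trans (Finset.sum_le_sum fun i _ => ?_)
        rw [← smul_sub, norm_smul, Real.norm_of_nonneg (hω i)]
        exact mul_le_mul_of_nonneg_left (hn i) (hω i)
    _ = b n + ∑ i, ω i * e i n := by
        simp only [mul_add, Finset.sum_add_distrib, ← Finset.sum_mul, hω_sum, one_mul]

lemma tendsto_norm_succ_sub (hit : IsInertialProxIteration ω f g T u θ lam β α x z d y)
    (hω : ∀ i, 0 ≤ ω i) (hω_sum : ∑ i, ω i = 1) (hT : ∀ i, LipschitzWith 1 (T i))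
    (hα₀ : ∀ n, 0 ≤ α n) (hα₁ : ∀ n, α n ≤ 1) (hα : ¬ Summable α)
    (hα_equiv : (fun n => α (n + 1)) ~[atTop] α)
    (hy : ∀ i, (fun n => y n i) =O[atTop] fun _ => (1 : ℝ))
    (hy_succ : ∀ i, ∃ e : ℕ → ℝ, e =o[atTop] α ∧
      ∀ᶠ n in atTop, ‖y (n + 1) i - y n i‖ ≤ ‖x (n + 1) - x n‖ + e n) :
    Tendsto (fun n => ‖x (n + 1) - x n‖) atTop (𝓝 0) := by
  obtain ⟨e, he, hle⟩ :=
    hit.exists_norm_succ_sub_le hω hω_sum fun i =>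
      exists_norm_anchor_succ_sub_le (hT i) hα₀ hα₁ hα_equiv.isLittleO (hy i) (hy_succ i)
  exact tendsto_zero_of_succ_le_one_sub_mul_add (fun n => norm_nonneg _) (fun n => hα₀ (n + 1))
    (fun n => hα₁ (n + 1)) (mt (summable_nat_add_iff 1).1 hα)
    (he.trans_isBigO hα_equiv.isBigO_symm) hle

lemma norm_succ_sub_sq_add_sum_le (hit : IsInertialProxIteration ω f g T u θ lam β α x z d y)
    (hω : ∀ i, 0 ≤ ω i) (hω_sum : ∑ i, ω i = 1) (hf : ∀ i, ConvexOn ℝ Set.univ (f i))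
    (hT : ∀ i, IsFirmlyNonexpansive (T i)) {s : H} (hs : ∀ i, T i s = s)
    (hlam : ∀ n, 0 < lam n) (hα₀ : ∀ n, 0 ≤ α n) (hα₁ : ∀ n, α n ≤ 1) {n : ℕ} (hn : 1 ≤ n) :
    ‖x (n + 1) - s‖ ^ 2 + ∑ i, ω i * (‖z n - y n i‖ ^ 2 + ‖y n i - T i (y n i)‖ ^ 2)
      ≤ ‖z n - s‖ ^ 2 + ∑ i, ω i * (α n * ‖u i - s‖ ^ 2
        + 2 * lam n * (f i s - f i (y n i) + inner ℝ (d (n + 1) i) (y n i - s))) := by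
  have hconv : ConvexOn ℝ Set.univ fun v : H => ‖v - s‖ ^ 2 :=
    (convexOn_univ_dist s).pow (fun v _ => dist_nonneg) 2 |>.congr fun v _ => by
      simp [dist_eq_norm]
  have haverage : ‖x (n + 1) - s‖ ^ 2
      ≤ ∑ i, ω i * ‖α n • u i + (1 - α n) • T i (y n i) - s‖ ^ 2 := by
    rw [hit.average n hn]
    exact hconv.map_sum_le (fun i _ => hω i) hω_sum fun i _ => Set.mem_univ _
  have hsum := Finset.sum_le_sum fun i (_ : i ∈ Finset.univ) => mul_le_mul_of_nonneg_left
    (norm_anchor_sub_sq_add_le (u := u i) (hT i) (hs i) (hf i) (hlam n) (hit.prox n hn i)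
      (hα₀ n) (hα₁ n)) (hω i)
  simp only [mul_add (ω _) (‖_‖ ^ 2) _, Finset.sum_add_distrib, ← Finset.sum_mul, hω_sum,
    one_mul] at hsum ⊢
  linarith

lemma tendsto_prox_residual (hit : IsInertialProxIteration ω f g T u θ lam β α x z d y)
    (hω : ∀ i, 0 < ω i) (hω_sum : ∑ i, ω i = 1) (hf : ∀ i, ConvexOn ℝ Set.univ (f i))
    (hT : ∀ i, IsFirmlyNonexpansive (T i)) {s : H} (hs : ∀ i, T i s = s)
    (hlam : ∀ n, 0 < lam n) (hlam_lim : Tendsto lam atTop (𝓝 0))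
    (hα₀ : ∀ n, 0 ≤ α n) (hα₁ : ∀ n, α n ≤ 1) (hα_lim : Tendsto α atTop (𝓝 0))
    (hd : ∀ i, (fun n => d n i) =O[atTop] fun _ => (1 : ℝ))
    (hy : ∀ i, (fun n => y n i) =O[atTop] fun _ => (1 : ℝ))
    (hgap : Tendsto (fun n => ‖z n - s‖ ^ 2 - ‖x (n + 1) - s‖ ^ 2) atTop (𝓝 0)) (i : ι) :
    Tendsto (fun n => ‖z n - y n i‖ ^ 2 + ‖y n i - T i (y n i)‖ ^ 2) atTop (𝓝 0) := by
  choose B hB using fun i => (hit.prox 1 le_rfl i).isBoundedUnder_ge_comp (hf i) (hlam 1) (hy i)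
  have hobjective (j : ι) : Tendsto (fun n =>
      2 * lam n * (f j s - B j + inner ℝ (d (n + 1) j) (y n j - s))) atTop (𝓝 0) :=
    tendsto_mul_const_add_inner (by simpa using hlam_lim.const_mul 2) _
      ((hd j).comp_tendsto (tendsto_add_atTop_nat 1))
      ((hy j).sub (isBigO_const_const s one_ne_zero atTop))
  have herror : Tendsto (fun n => ∑ j, ω j * (α n * ‖u j - s‖ ^ 2
      + 2 * lam n * (f j s - B j + inner ℝ (d (n + 1) j) (y n j - s)))) atTop (𝓝 0) := by
    simpa using tendsto_finsetSum Finset.univ fun j _ =>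
      ((hα_lim.mul_const (‖u j - s‖ ^ 2)).add (hobjective j)).const_mul (ω j)
  have hlim := (hgap.add herror).div_const (ω i)
  rw [add_zero, zero_div] at hlim
  refine squeeze_zero' (.of_forall fun n => by positivity) ?_ hlim
  filter_upwards [eventually_all.2 hB, eventually_ge_atTop 1] with n hn hn₁
  rw [le_div_iff₀' (hω i)]
  have hfejer :=
    hit.norm_succ_sub_sq_add_sum_le (fun j => (hω j).le) hω_sum hf hT hs hlam hα₀ hα₁ hn₁
  have hlower : ∑ j, ω j * (α n * ‖u j - s‖ ^ 2
        + 2 * lam n * (f j s - f j (y n j) + inner ℝ (d (n + 1) j) (y n j - s)))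
      ≤ ∑ j, ω j * (α n * ‖u j - s‖ ^ 2
        + 2 * lam n * (f j s - B j + inner ℝ (d (n + 1) j) (y n j - s))) := by
    gcongr with j
    exacts [(hω j).le, by linarith [hlam n], hn j]
  have hsingle := Finset.single_le_sum
    (f := fun j => ω j * (‖z n - y n j‖ ^ 2 + ‖y n j - T j (y n j)‖ ^ 2))
    (fun j _ => mul_nonneg (hω j).le (by positivity)) (Finset.mem_univ i)
  linarith

end IsInertialProxIteration

theorem alg2_residuals_tendsto_zero_general {ω : ι → ℝ} {f h : ι → H → ℝ} {h' T : ι → H → H}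
    {u : ι → H} {θ lam β α : ℕ → ℝ} {x z : ℕ → H} {d y : ℕ → ι → H}
    (hit : IsInertialProxIteration ω f h' T u θ lam β α x z d y)
    (hω : ∀ i, 0 < ω i) (hω_sum : ∑ i, ω i = 1) (hf : ∀ i, ConvexOn ℝ Set.univ (f i))
    (hh : ∀ i, ConvexOn ℝ Set.univ (h i))
    (hgrad : ∀ i x, HasFDerivAt (h i) (innerSL ℝ (h' i x)) x)
    {K : ι → NNReal} (hlip : ∀ i, LipschitzWith (K i) (h' i))
    (hT : ∀ i, IsFirmlyNonexpansive (T i)) {s : H} (hs : ∀ i, T i s = s)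
    (hlam : ∀ n, 0 < lam n) (hlam_lim : Tendsto lam atTop (𝓝 0))
    (hratio : (fun n => 1 - lam (n + 1) / lam n) =o[atTop] α)
    (hα₀ : ∀ n, 0 ≤ α n) (hα₁ : ∀ n, α n ≤ 1) (hα_lim : Tendsto α atTop (𝓝 0))
    (hα : ¬ Summable α) (hα_equiv : (fun n => α (n + 1)) ~[atTop] α)
    (hθ : θ =o[atTop] α) (hβ : β =o[atTop] α)
    (hy : ∀ i, (fun n => y n i) =O[atTop] fun _ => (1 : ℝ)) (i : ι) :
    Tendsto (fun n => ‖z n - y n i‖) atTop (𝓝 0) ∧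
      Tendsto (fun n => ‖x n - y n i‖) atTop (𝓝 0) ∧
      Tendsto (fun n => ‖T i (x n) - x n‖) atTop (𝓝 0) := by
  have hT₁ (i : ι) := (hT i).lipschitzWith
  have hforward (i : ι) : ∀ᶠ n in atTop, LipschitzWith 1 fun v => v - lam n • h' i v := by
    have hsmall : ∀ᶠ n in atTop, lam n * K i < 2 :=
      (hlam_lim.mul_const (K i : ℝ)).eventually_lt_const (by simp)
    exact hsmall.mono fun n hn =>
      lipschitzWith_one_sub_smul_gradient (hlip i) (hgrad i) (hh i) (hlam n).le hn.le
  have hx := hit.isBigO_iterate hT₁ hα_lim hy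
  have hzx := hit.isLittleO_extrapolation_sub hx hθ
  have hzx_lim := hzx.trans_tendsto hα_lim
  have hz : z =O[atTop] fun _ => (1 : ℝ) := by simpa using (hzx_lim.isBigO_one ℝ).add hx
  have hd (i : ι) := hit.isBigO_direction (hlip i) (hβ.trans_tendsto hα_lim) hz
  have hregular : Tendsto (fun n => ‖x (n + 1) - x n‖) atTop (𝓝 0) :=
    hit.tendsto_norm_succ_sub (fun i => (hω i).le) hω_sum hT₁ hα₀ hα₁ hα hα_equiv hy fun i =>
      hit.exists_norm_prox_succ_sub_le (hf i) hlam (hlam_lim.isBigO_one ℝ) (hforward i)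
        hα_equiv.isBigO hβ hratio hzx (hd i) (hz.sub (hy i))
  obtain ⟨hzy, hyT⟩ := tendsto_norm_zero_of_norm_sq_add_norm_sq
    (hit.tendsto_prox_residual hω hω_sum hf hT hs hlam hlam_lim hα₀ hα₁ hα_lim hd hy
      (tendsto_norm_sub_sq_sub_norm_succ_sub_sq s hx hzx_lim hregular) i)
  have hxy : Tendsto (fun n => ‖x n - y n i‖) atTop (𝓝 0) := by
    simpa using ((tendsto_zero_iff_norm_tendsto_zero.2 hzy).sub hzx_lim).norm
  exact ⟨hzy, hxy, squeeze_zero (fun n => norm_nonneg _)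
    (fun n => norm_map_sub_self_le (hT₁ i) (x n) (y n i))
    (by simpa using (hxy.const_mul 2).add hyT)⟩

end Iteration

theorem alg2_residuals_tendsto_zero
    {H : Type*} [NormedAddCommGroup H] [InnerProductSpace ℝ H] [CompleteSpace H]
    (M : ℕ) (hM : 1 ≤ M)
    (f h : ℕ → H → ℝ) (h' : ℕ → H → H) (L : ℕ → ℝ) (T : ℕ → H → H)
    (hf_cont : ∀ i ∈ Finset.Icc 1 M, Continuous (f i))
    (hf_conv : ∀ i ∈ Finset.Icc 1 M, ConvexOn ℝ Set.univ (f i))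
    (hh_conv : ∀ i ∈ Finset.Icc 1 M, ConvexOn ℝ Set.univ (h i))
    (hh_grad : ∀ i ∈ Finset.Icc 1 M, ∀ x : H, HasGradientAt (h i) (h' i x) x)
    (hL_pos : ∀ i ∈ Finset.Icc 1 M, 0 < L i)
    (hh_lip : ∀ i ∈ Finset.Icc 1 M, ∀ x y : H, ‖h' i x - h' i y‖ ≤ (1 / L i) * ‖x - y‖)
    (hT_firm : ∀ i ∈ Finset.Icc 1 M, ∀ x y : H,
      ‖T i x - T i y‖ ^ 2 ≤ @inner ℝ H _ (T i x - T i y) (x - y))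
    (S : Set H) (hS : S = ⋂ i ∈ Finset.Icc 1 M, {x : H | T i x = x}) (hS_ne : S.Nonempty)
    (θ lam β α : ℕ → ℝ) (σ : ℝ) (hσ : 1 ≤ σ)
    (hθ_range : ∀ n, 0 ≤ θ n ∧ θ n < 1)
    (hlam_pos : ∀ n, 0 < lam n)
    (hlam_le : ∀ n, ∀ i ∈ Finset.Icc 1 M, lam n ≤ 2 * L i)
    (hβ_range : ∀ n, 0 < β n ∧ β n ≤ 1)
    (hα_range : ∀ n, 0 < α n ∧ α n ≤ 1)
    (hθ_anti : Antitone θ) (hlam_anti : Antitone lam)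
    (hβ_anti : Antitone β) (hα_anti : Antitone α)
    (hθ_lim : Tendsto θ atTop (𝓝 0)) (hlam_lim : Tendsto lam atTop (𝓝 0))
    (hβ_lim : Tendsto β atTop (𝓝 0)) (hα_lim : Tendsto α atTop (𝓝 0))
    (hC1 : ¬ Summable α)
    (hC2 : Tendsto (fun n => (1 / α (n+1)) * |1 / lam (n+1) - 1 / lam n|) atTop (𝓝 0))
    (hC3 : Tendsto (fun n => (1 / lam (n+1)) * |1 - α n / α (n+1)|) atTop (𝓝 0))
    (hC4 : Tendsto (fun n => α n / lam n) atTop (𝓝 0))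
    (hC5 : Tendsto (fun n => θ n / (α (n+1) * lam (n+1))) atTop (𝓝 0))
    (hC6 : ∀ n, lam n / lam (n+1) ≤ σ)
    (hC7 : Tendsto (fun n => β n / α (n+1)) atTop (𝓝 0))
    (x z : ℕ → H) (w y d : ℕ → ℕ → H) (u : ℕ → H)
    (hd1 : ∀ i ∈ Finset.Icc 1 M, d 1 i = -(h' i (z 0)))
    (hz : ∀ n ≥ 1, z n = x n + θ n • (x n - x (n-1)))
    (hd : ∀ n ≥ 1, ∀ i ∈ Finset.Icc 1 M, d (n+1) i = -(h' i (z n)) + β n • d n i)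
    (hy : ∀ n ≥ 1, ∀ i ∈ Finset.Icc 1 M, ∀ v : H,
      f i (y n i) + (1 / (2 * lam n)) * ‖z n + lam n • d (n+1) i - y n i‖ ^ 2
        ≤ f i v + (1 / (2 * lam n)) * ‖z n + lam n • d (n+1) i - v‖ ^ 2)
    (hw : ∀ n ≥ 1, ∀ i ∈ Finset.Icc 1 M,
      w n (i+1) = α n • u i + (1 - α n) • T i (y n i))
    (hx : ∀ n ≥ 1, x (n+1) = (M : ℝ)⁻¹ • ∑ i ∈ Finset.Icc 1 M, w n (i+1))
    (hy_bdd : ∀ i ∈ Finset.Icc 1 M, ∃ C, ∀ n ≥ 1, ‖y n i‖ ≤ C)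
    : ∀ i ∈ Finset.Icc 1 M,
      Tendsto (fun n => ‖z n - y n i‖) atTop (𝓝 0) ∧
      Tendsto (fun n => ‖x n - y n i‖) atTop (𝓝 0) ∧
      Tendsto (fun n => ‖T i (x n) - x n‖) atTop (𝓝 0) := by
  have hα₀ (n : ℕ) : α n ≠ 0 := (hα_range n).1.ne'
  have hlam₀ (n : ℕ) : lam n ≠ 0 := (hlam_pos n).ne'
  have hα_equiv := isEquivalent_succ_of_tendsto hlam₀ hlam_lim hC3
  obtain ⟨s, hs⟩ := hS_ne
  rw [hS, Set.mem_iInter₂] at hs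
  have hit : IsInertialProxIteration (fun _ : Finset.Icc 1 M => (M : ℝ)⁻¹) (fun i => f i)
      (fun i => h' i) (fun i => T i) (fun i => u i) θ lam β α x z (fun n i => d n i)
      (fun n i => y n i) :=
    ⟨hz, fun n hn i => hd n hn i i.2, fun n hn i => hy n hn i i.2, fun n hn => by
      rw [hx n hn, Finset.sum_congr rfl (hw n hn), Finset.smul_sum, ← Finset.sum_coe_sort]⟩
  intro i hi
  exact alg2_residuals_tendsto_zero_general hit (fun _ => by positivity)
    (by simp [show (M : ℝ) ≠ 0 by positivity]) (fun i => hf_conv i i.2) (fun i => hh_conv i i.2)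
    (fun i v => hasGradientAt_iff_hasFDerivAt.1 (hh_grad i i.2 v))
    (fun i => .of_dist_le' fun v v' => by simpa only [dist_eq_norm] using hh_lip i i.2 v v')
    (fun i => hT_firm i i.2) (fun i => hs i i.2) hlam_pos hlam_lim
    (isLittleO_one_sub_div_of_tendsto hα₀ hα_equiv.isBigO hlam_pos hlam_lim hC2)
    (fun n => (hα_range n).1.le) (fun n => (hα_range n).2) hα_lim hC1 hα_equiv
    (isLittleO_of_tendsto_div_mul_succ hα₀ hα_equiv.isBigO hlam₀ hlam_lim hC5)
    (isLittleO_of_tendsto_div_succ hα₀ hα_equiv.isBigO hC7)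
    (fun i => (hy_bdd i i.2).elim fun C hC =>
      .of_bound C ((eventually_ge_atTop 1).mono fun n hn => by simpa using hC n hn)) ⟨i, hi⟩
end

section
/- Let ψ = Σ_{i=1}^M (f_i + h_i) and Ω = {x̂ ∈ S : ψ(x̂) = min_{x∈S} ψ(x)}, assumed nonempty. Every weak sequential cluster point of the sequence {x_n} generated by Algorithm 2 belongs to Ω. -/
open Filter Topology

/-!
A forward-backward step with step size at most `2 / K` is nonexpansive in the current point
(Baillon–Haddad), and the anchoring `α u + (1 - α) T y` turns this into a contraction with factor
`1 - α`. All other contributions to `‖x (n + 1) - x n‖`, coming from the inertia, the momentum and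
the variation of the parameters, are `o(α λ)`, so Xu's lemma applied to `‖x (n + 1) - x n‖ / λ n`
gives `‖x (n + 1) - x n‖ = o(λ)`.

For a common fixed point `q` the proximal inequality then yields the energy estimate
`∑ (‖w i - x⁺‖² + ‖z - y i‖²) + 2 λ ∑ (f i (y i) - f i q - ⟪d⁺ i, y i - q⟫) ≤ o(λ)`. Affine
minorants of the `f i` bound the gap sum from below, so the residuals vanish, and every weak cluster
point is a common fixed point by demiclosedness. Dividing by `λ` instead and using the gradient
inequality for the `h i` bounds `∑ (f i (y i) + h i z)` by `∑ (f i q + h i q) + o(1)`, and weak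
lower semicontinuity of convex functions yields minimality.
-/

open Asymptotics
open scoped NNReal RealInnerProductSpace

section RealSequences

/-- Xu's lemma. -/
lemma tendsto_zero_of_le_one_sub_mul_add {s a e : ℕ → ℝ} (hs : ∀ n, 0 ≤ s n)
    (ha_nonneg : ∀ n, 0 ≤ a n) (ha_le : ∀ n, a n ≤ 1) (ha_sum : ¬ Summable a) (he : e =o[atTop] a)
    (hrec : ∀ᶠ n in atTop, s (n + 1) ≤ (1 - a n) * s n + e n) :
    Tendsto s atTop (𝓝 0) := by
  rw [Metric.tendsto_atTop]
  intro δ hδ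
  obtain ⟨N, hN⟩ := eventually_atTop.1 (hrec.and (he.bound (show 0 < δ / 4 by positivity)))
  have hstep : ∀ n ≥ N, s (n + 1) ≤ s n - a n * (s n - δ / 4) := fun n hn => by
    have he_le := (le_abs_self _).trans (hN n hn).2
    rw [Real.norm_of_nonneg (ha_nonneg n)] at he_le
    linarith [(hN n hn).1]
  -- otherwise each step decreases `s` by at least `a n * (δ / 4)`, and `a` would be summable
  obtain ⟨m, hm, hsm⟩ : ∃ n ≥ N, s n < δ / 2 := by
    by_contra! hlarge
    have htelescope (n : ℕ) :
        (∑ i ∈ Finset.range n, a (i + N)) * (δ / 4) ≤ s N - s (n + N) := by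
      induction n with
      | zero => simp
      | succ k ih =>
        rw [Finset.sum_range_succ, add_mul, Nat.add_right_comm]
        nlinarith [hstep (k + N) (by lia), hlarge (k + N) (by lia), ha_nonneg (k + N)]
    refine ha_sum <| (summable_nat_add_iff N).1 <|
      summable_of_sum_range_le (c := s N / (δ / 4)) (fun n => ha_nonneg _) fun n => ?_
    rw [le_div_iff₀ (by positivity)]
    linarith [htelescope n, hs (n + N)]
  have hsmall : ∀ n ≥ m, s n ≤ δ / 2 := fun n hn => by
    induction n, hn using Nat.le_induction with
    | base => exact hsm.le
    | succ k hk ih => nlinarith [hstep k (by lia), ha_nonneg k, ha_le k]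
  refine ⟨m, fun n hn => ?_⟩
  rw [Real.dist_eq, sub_zero, abs_of_nonneg (hs n)]
  linarith [hsmall n hn]

variable {κ ι : Type*} {l : Filter κ}

lemma eventually_lt_add {g₁ g₂ : κ → ℝ} {c₁ c₂ : ℝ} (h₁ : ∀ a < c₁, ∀ᶠ k in l, a < g₁ k)
    (h₂ : ∀ a < c₂, ∀ᶠ k in l, a < g₂ k) {a : ℝ} (ha : a < c₁ + c₂) :
    ∀ᶠ k in l, a < g₁ k + g₂ k := by
  obtain ⟨b, hb₂, hb₁⟩ := exists_between (sub_lt_iff_lt_add.2 ha)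
  filter_upwards [h₁ b hb₁, h₂ (a - b) (by linarith)] with k hk₁ hk₂
  linarith

lemma eventually_lt_sum {I : Finset ι} {g : ι → κ → ℝ} {c : ι → ℝ}
    (h : ∀ i ∈ I, ∀ a < c i, ∀ᶠ k in l, a < g i k) {a : ℝ} (ha : a < ∑ i ∈ I, c i) :
    ∀ᶠ k in l, a < ∑ i ∈ I, g i k := by
  classical
  induction I using Finset.induction_on generalizing a with
  | empty => simp_all
  | insert i I hi ih =>
    simp only [Finset.sum_insert hi] at ha ⊢
    exact eventually_lt_add (h i (I.mem_insert_self i))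
      (fun b hb => ih (fun j hj => h j (Finset.mem_insert_of_mem hj)) hb) ha

lemma isLittleO_of_tendsto_one_div_mul_abs {g₁ g₂ : κ → ℝ} (hpos : ∀ k, 0 < g₂ k)
    (hlim : Tendsto (fun k => 1 / g₂ k * |g₁ k|) l (𝓝 0)) : g₁ =o[l] g₂ :=
  isLittleO_abs_left.1 <| isLittleO_of_tendsto (fun k hk => absurd hk (hpos k).ne') <|
    hlim.congr fun _ => one_div_mul_eq_div _ _

end RealSequences

section Boundedness

variable {E F : Type*} [NormedAddCommGroup E] [NormedAddCommGroup F]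

lemma tendsto_zero_of_norm_sq_le {κ : Type*} {l : Filter κ} {v : κ → E} {g : κ → ℝ}
    (hle : ∀ k, ‖v k‖ ^ 2 ≤ g k) (hg : Tendsto g l (𝓝 0)) : Tendsto v l (𝓝 0) :=
  squeeze_zero_norm (fun k => Real.le_sqrt_of_sq_le (hle k)) (by simpa using hg.sqrt)

lemma isBigO_one_comp_of_lipschitzWith_s16 {κ : Type*} {l : Filter κ} {K : ℝ≥0} {g : E → F}
    (hg : LipschitzWith K g) {v : κ → E} (hv : v =O[l] (1 : κ → ℝ)) :
    (fun k => g (v k)) =O[l] (1 : κ → ℝ) := by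
  have hdiff : (fun k => g (v k) - g 0) =O[l] v :=
    .of_bound K (.of_forall fun k => by simpa using hg.norm_sub_le (v k) 0)
  simpa using (hdiff.trans hv).add (isBigO_const_const (g 0) one_ne_zero l)

lemma isBigO_one_of_recurrence [NormedSpace ℝ E] {d g : ℕ → E} {b : ℕ → ℝ}
    (hb : Tendsto b atTop (𝓝 0)) (hg : g =O[atTop] (1 : ℕ → ℝ))
    (hd : ∀ᶠ n in atTop, d (n + 1) = g n + b n • d n) : d =O[atTop] (1 : ℕ → ℝ) := by
  obtain ⟨G, hG⟩ := isBigO_one_nat_atTop_iff.1 hg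
  have hb_half : ∀ᶠ n in atTop, |b n| < 1 / 2 := by
    simpa using hb.abs.eventually_lt_const (show |(0 : ℝ)| < 1 / 2 by norm_num)
  obtain ⟨N, hN⟩ := eventually_atTop.1 (hd.and hb_half)
  refine .of_bound (max (2 * G) ‖d N‖) (eventually_atTop.2 ⟨N, fun n hn => ?_⟩)
  rw [Pi.one_apply, norm_one, mul_one]
  induction n, hn using Nat.le_induction with
  | base => exact le_max_right _ _
  | succ k hk ih =>
    obtain ⟨hdk, hbk⟩ := hN k hk
    calc ‖d (k + 1)‖ ≤ ‖g k‖ + |b k| * ‖d k‖ := by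
          rw [hdk, ← Real.norm_eq_abs, ← norm_smul]; exact norm_add_le _ _
      _ ≤ G + 1 / 2 * max (2 * G) ‖d N‖ := by gcongr; exact hG k
      _ ≤ max (2 * G) ‖d N‖ := by linarith [le_max_left (2 * G) ‖d N‖]

end Boundedness

section HilbertSpace

variable {H : Type*} [NormedAddCommGroup H] [InnerProductSpace ℝ H]

lemma isBigO_inner_norm_mul_norm {κ : Type*} (l : Filter κ) (v v' : κ → H) :
    (fun k => ⟪v k, v' k⟫) =O[l] fun k => ‖v k‖ * ‖v' k‖ :=
  .of_norm_le fun k => norm_inner_le_norm (v k) (v' k)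

lemma tendsto_inner_zero_of_isBigO_one {κ : Type*} {l : Filter κ} {v v' : κ → H}
    (hv : v =O[l] (1 : κ → ℝ)) (hv' : Tendsto v' l (𝓝 0)) :
    Tendsto (fun k => ⟪v k, v' k⟫) l (𝓝 0) :=
  (isLittleO_one_iff ℝ).1 <| ((isBigO_inner_norm_mul_norm l v v').trans_isLittleO <|
    hv.norm_left.mul_isLittleO ((isLittleO_one_iff ℝ).2 hv').norm_left).congr_right
      fun _ => one_mul _

lemma lipschitzWith_one_of_norm_sub_sq_le_inner {T : H → H}
    (hT : ∀ a b, ‖T a - T b‖ ^ 2 ≤ ⟪T a - T b, a - b⟫) : LipschitzWith 1 T := by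
  refine .of_dist_le_mul fun a b => ?_
  rw [dist_eq_norm, dist_eq_norm, NNReal.coe_one, one_mul]
  rcases (norm_nonneg (T a - T b)).eq_or_lt with h₀ | hpos
  · exact h₀ ▸ norm_nonneg _
  · exact le_of_mul_le_mul_left
      ((pow_two _).symm.trans_le ((hT a b).trans (real_inner_le_norm _ _))) hpos

section Means

variable {ι : Type*} (I : Finset ι) (v : ι → H)

lemma norm_inv_card_smul_sum_le :
    ‖(I.card : ℝ)⁻¹ • ∑ i ∈ I, v i‖ ≤ (I.card : ℝ)⁻¹ * ∑ i ∈ I, ‖v i‖ := by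
  rw [norm_smul, Real.norm_of_nonneg (by positivity)]
  gcongr
  exact norm_sum_le _ _

lemma sum_norm_sub_sq_eq_add (q : H) :
    ∑ i ∈ I, ‖v i - q‖ ^ 2 = I.card * ‖(I.card : ℝ)⁻¹ • ∑ i ∈ I, v i - q‖ ^ 2 +
      ∑ i ∈ I, ‖v i - (I.card : ℝ)⁻¹ • ∑ i ∈ I, v i‖ ^ 2 := by
  set m := (I.card : ℝ)⁻¹ • ∑ i ∈ I, v i with hm
  have hcentered : ∑ i ∈ I, (v i - m) = 0 := by
    rcases I.eq_empty_or_nonempty with rfl | hI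
    · simp
    · rw [Finset.sum_sub_distrib, Finset.sum_const, ← Nat.cast_smul_eq_nsmul ℝ, hm,
        smul_inv_smul₀ (by simp [hI.ne_empty]), sub_self]
  have hcross : ∑ i ∈ I, ⟪v i - m, m - q⟫ = 0 := by
    rw [← sum_inner, hcentered, inner_zero_left]
  have hsplit (i : ι) :
      ‖v i - q‖ ^ 2 = ‖v i - m‖ ^ 2 + 2 * ⟪v i - m, m - q⟫ + ‖m - q‖ ^ 2 := by
    rw [← norm_add_sq_real, sub_add_sub_cancel]
  simp only [hsplit, Finset.sum_add_distrib, ← Finset.mul_sum, hcross, Finset.sum_const,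
    nsmul_eq_mul]
  ring

end Means

section Gradient

variable [CompleteSpace H] {h : H → ℝ} {h' : H → H} {K : ℝ≥0}

lemma hasDerivAt_comp_add_smul {a d g : H} {t : ℝ} (hg : HasGradientAt h g (a + t • d)) :
    HasDerivAt (fun s : ℝ => h (a + s • d)) ⟪g, d⟫ t := by
  have hline : HasDerivAt (fun s : ℝ => a + s • d) d t := by
    simpa using ((hasDerivAt_id t).smul_const d).const_add a
  simpa [Function.comp_def] using hg.hasFDerivAt.comp_hasDerivAt t hline

lemma add_inner_gradient_le (hh : ConvexOn ℝ Set.univ h) {a g : H} (hg : HasGradientAt h g a)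
    (b : H) : h a + ⟪g, b - a⟫ ≤ h b := by
  have hconv : ConvexOn ℝ Set.univ (fun t : ℝ => h (a + t • (b - a))) := by
    simpa [AffineMap.lineMap_apply, Function.comp_def, add_comm] using
      hh.comp_affineMap (AffineMap.lineMap (k := ℝ) a b)
  have hderiv : HasDerivAt (fun t : ℝ => h (a + t • (b - a))) ⟪g, b - a⟫ 0 :=
    hasDerivAt_comp_add_smul (by simpa using hg)
  have hslope := hconv.le_slope_of_hasDerivAt trivial trivial zero_lt_one hderiv
  simp only [slope_def_field, one_smul, zero_smul, add_zero, add_sub_cancel, sub_zero,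
    div_one] at hslope
  linarith

/-- The descent lemma. -/
lemma le_add_inner_gradient_add_sq (hg : ∀ x, HasGradientAt h (h' x) x) (hlip : LipschitzWith K h')
    (a b : H) : h b ≤ h a + ⟪h' a, b - a⟫ + K / 2 * ‖b - a‖ ^ 2 := by
  set d := b - a with hd
  let gap : ℝ → ℝ := fun t => h (a + t • d) - t * ⟪h' a, d⟫ - K / 2 * t ^ 2 * ‖d‖ ^ 2
  have hgap (t : ℝ) :
      HasDerivAt gap (⟪h' (a + t • d) - h' a, d⟫ - K * t * ‖d‖ ^ 2) t := by
    have := ((hasDerivAt_comp_add_smul (hg (a + t • d))).sub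
      ((hasDerivAt_id t).mul_const ⟪h' a, d⟫)).sub
      (((hasDerivAt_pow 2 t).const_mul (K / 2 : ℝ)).mul_const (‖d‖ ^ 2))
    refine this.congr_deriv ?_
    rw [inner_sub_left]
    push_cast
    ring
  have hgap_nonpos : ∀ t ∈ interior (Set.Ici (0 : ℝ)),
      ⟪h' (a + t • d) - h' a, d⟫ - K * t * ‖d‖ ^ 2 ≤ 0 := fun t ht => by
    rw [interior_Ici, Set.mem_Ioi] at ht
    have hbound : ‖h' (a + t • d) - h' a‖ ≤ K * (t * ‖d‖) := by
      simpa [norm_smul, abs_of_pos ht] using hlip.norm_sub_le (a + t • d) a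
    nlinarith [real_inner_le_norm (h' (a + t • d) - h' a) d, norm_nonneg d]
  have hanti : AntitoneOn gap (Set.Ici 0) :=
    antitoneOn_of_hasDerivWithinAt_nonpos (convex_Ici 0)
      (fun t _ => (hgap t).continuousAt.continuousWithinAt)
      (fun t _ => (hgap t).hasDerivWithinAt) hgap_nonpos
  have hle := hanti Set.self_mem_Ici (Set.mem_Ici.2 zero_le_one) zero_le_one
  simp only [gap, hd, one_smul, zero_smul, add_zero, add_sub_cancel] at hle ⊢
  linarith

/-- The tangent inequality at `a` and the descent lemma at `b` are combined at the point reached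
from `b` by a gradient step of length `K⁻¹` for `h - ⟪h' a, ·⟫`. -/
lemma add_inner_gradient_add_norm_sub_sq_le (hh : ConvexOn ℝ Set.univ h)
    (hg : ∀ x, HasGradientAt h (h' x) x) (hlip : LipschitzWith K h') (hK : 0 < K) (a b : H) :
    h a + ⟪h' a, b - a⟫ + ‖h' b - h' a‖ ^ 2 / (2 * K) ≤ h b := by
  have hK_ne : (K : ℝ) ≠ 0 := NNReal.coe_ne_zero.2 hK.ne'
  set g := h' b - h' a
  have hlower := add_inner_gradient_le hh (hg a) (b - (K : ℝ)⁻¹ • g)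
  have hupper := le_add_inner_gradient_add_sq hg hlip b (b - (K : ℝ)⁻¹ • g)
  have hself : ⟪h' b, g⟫ - ⟪h' a, g⟫ = ‖g‖ ^ 2 := by
    rw [← inner_sub_left, real_inner_self_eq_norm_sq]
  rw [sub_right_comm, inner_sub_right, inner_smul_right] at hlower
  rw [sub_sub_cancel_left, inner_neg_right, inner_smul_right, norm_neg, norm_smul,
    Real.norm_of_nonneg (by positivity)] at hupper
  have hquad : (K : ℝ) / 2 * ((K : ℝ)⁻¹ * ‖g‖) ^ 2 = (K : ℝ)⁻¹ * ‖g‖ ^ 2 / 2 := by field_simp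
  have htarget : ‖g‖ ^ 2 / (2 * K) = (K : ℝ)⁻¹ * ‖g‖ ^ 2 / 2 := by field_simp
  have hscaled : (K : ℝ)⁻¹ * ⟪h' b, g⟫ - (K : ℝ)⁻¹ * ⟪h' a, g⟫ = (K : ℝ)⁻¹ * ‖g‖ ^ 2 := by
    rw [← mul_sub, hself]
  linarith

/-- The Baillon–Haddad theorem. -/
lemma norm_gradient_sub_sq_le (hh : ConvexOn ℝ Set.univ h) (hg : ∀ x, HasGradientAt h (h' x) x)
    (hlip : LipschitzWith K h') (a b : H) :
    ‖h' a - h' b‖ ^ 2 ≤ K * ⟪a - b, h' a - h' b⟫ := by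
  rcases eq_zero_or_pos K with rfl | hK
  · have hconst := hlip.norm_sub_le a b
    simp only [NNReal.coe_zero, zero_mul, norm_le_zero_iff] at hconst
    simp [hconst]
  have hab := add_inner_gradient_add_norm_sub_sq_le hh hg hlip hK a b
  have hba := add_inner_gradient_add_norm_sub_sq_le hh hg hlip hK b a
  rw [norm_sub_rev, ← neg_sub a b, inner_neg_right] at hab
  rw [← div_le_iff₀' (NNReal.coe_pos.2 hK), real_inner_comm, inner_sub_left]
  have hhalf : ‖h' a - h' b‖ ^ 2 / (2 * K) = ‖h' a - h' b‖ ^ 2 / K / 2 := by field_simp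
  linarith

lemma norm_sub_sub_smul_gradient_sub_le (hh : ConvexOn ℝ Set.univ h)
    (hg : ∀ x, HasGradientAt h (h' x) x) (hlip : LipschitzWith K h') {γ : ℝ} (hγ : 0 ≤ γ)
    (hγK : γ * K ≤ 2) (a b : H) : ‖a - b - γ • (h' a - h' b)‖ ≤ ‖a - b‖ := by
  have hcoco := norm_gradient_sub_sq_le hh hg hlip a b
  have hinner : 0 ≤ ⟪a - b, h' a - h' b⟫ := by
    rw [real_inner_comm, inner_sub_left]
    have hab := add_inner_gradient_le hh (hg a) b
    have hba := add_inner_gradient_le hh (hg b) a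
    rw [← neg_sub a b, inner_neg_right] at hab
    linarith
  refine le_of_sq_le_sq ?_ (norm_nonneg _)
  rw [norm_sub_sq_real, inner_smul_right, norm_smul, Real.norm_of_nonneg hγ]
  nlinarith [mul_le_mul_of_nonneg_left hcoco (sq_nonneg γ),
    mul_nonneg (mul_nonneg hγ (sub_nonneg.2 hγK)) hinner]

end Gradient

section WeakConvergence

variable {κ : Type*} {l : Filter κ} {v v' : κ → H} {p : H} {f : H → ℝ}

/-- Weak convergence of `v` to `p` along `l`. By the Riesz representation theorem, in a Hilbert
space it suffices to test against inner products instead of continuous functionals. -/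
def TendstoWeakly (v : κ → H) (l : Filter κ) (p : H) : Prop :=
  ∀ q : H, Tendsto (fun k => ⟪v k, q⟫) l (𝓝 ⟪p, q⟫)

namespace TendstoWeakly

lemma of_tendsto_sub_zero (hv : TendstoWeakly v l p)
    (hsub : Tendsto (fun k => v' k - v k) l (𝓝 0)) : TendstoWeakly v' l p := fun q => by
  have hadd := (hv q).add (hsub.inner (tendsto_const_nhds (x := q)))
  simpa only [← inner_add_left, add_sub_cancel, add_zero] using hadd

lemma tendsto_inner_sub (hv : TendstoWeakly v l p) (s : H) :
    Tendsto (fun k => ⟪v k - p, s⟫) l (𝓝 0) := by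
  simpa only [inner_sub_left, sub_self] using (hv s).sub_const ⟪p, s⟫

end TendstoWeakly

lemma exists_add_inner_le_of_lt [CompleteSpace H] (hf : ConvexOn ℝ Set.univ f)
    (hf_lsc : LowerSemicontinuous f) {a : ℝ} (ha : a < f p) :
    ∃ s : H, ∀ v, a + ⟪s, v - p⟫ ≤ f v := by
  obtain ⟨φ, c, hle, hc⟩ := hf.exists_affine_le_of_lt (𝕜 := ℝ) (Set.mem_univ p) ha isClosed_univ
    (hf_lsc.lowerSemicontinuousOn _)
  refine ⟨(InnerProductSpace.toDual ℝ H).symm φ, fun v => ?_⟩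
  have hv : φ v + c ≤ f v := hle ⟨v, Set.mem_univ v⟩
  rw [InnerProductSpace.toDual_symm_apply, map_sub]
  simp only [RCLike.re_to_real] at hc
  linarith

namespace TendstoWeakly

lemma eventually_lt [CompleteSpace H] (hv : TendstoWeakly v l p) (hf : ConvexOn ℝ Set.univ f)
    (hf_lsc : LowerSemicontinuous f) {a : ℝ} (ha : a < f p) : ∀ᶠ k in l, a < f (v k) := by
  obtain ⟨b, hab, hb⟩ := exists_between ha
  obtain ⟨s, hs⟩ := exists_add_inner_le_of_lt hf hf_lsc hb
  filter_upwards [(hv.tendsto_inner_sub s).eventually_const_lt (sub_neg.2 hab)] with k hk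
  rw [real_inner_comm] at hk
  linarith [hs (v k)]

lemma apply_eq_self_of_nonexpansive [l.NeBot] (hv : TendstoWeakly v l p) {T : H → H}
    (hT : LipschitzWith 1 T) (hv_bdd : v =O[l] (1 : κ → ℝ))
    (hres : Tendsto (fun k => T (v k) - v k) l (𝓝 0)) : T p = p := by
  set r : κ → ℝ := fun k => ‖T (v k) - v k‖
  have hr : Tendsto r l (𝓝 0) := tendsto_zero_iff_norm_tendsto_zero.1 hres
  have hbound (k : κ) :
      ‖p - T p‖ ^ 2 ≤ r k ^ 2 + 2 * (r k * ‖v k - p‖) - 2 * ⟪v k - p, p - T p⟫ := by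
    have htri : ‖v k - p + (p - T p)‖ ≤ r k + ‖v k - p‖ := calc
      _ = ‖T (v k) - T p - (T (v k) - v k)‖ := by congr 1; abel
      _ ≤ ‖T (v k) - T p‖ + r k := norm_sub_le _ _
      _ ≤ r k + ‖v k - p‖ := by linarith [show _ ≤ _ by simpa using hT.norm_sub_le (v k) p]
    have hsq := pow_le_pow_left₀ (norm_nonneg _) htri 2
    rw [norm_add_sq_real] at hsq
    linarith
  have hcross : Tendsto (fun k => r k * ‖v k - p‖) l (𝓝 0) := by
    have hdist : (fun k => v k - p) =O[l] (1 : κ → ℝ) :=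
      hv_bdd.sub (isBigO_const_const p one_ne_zero l)
    simpa [isLittleO_one_iff, Pi.one_def] using
      ((isLittleO_one_iff ℝ).2 hr).mul_isBigO hdist.norm_left
  have hlim := ((hr.pow 2).add (hcross.const_mul 2)).sub
    ((hv.tendsto_inner_sub (p - T p)).const_mul 2)
  have hle : ‖p - T p‖ ^ 2 ≤ 0 := by simpa using ge_of_tendsto' hlim hbound
  exact (sub_eq_zero.1 (norm_eq_zero.1 (sq_eq_zero_iff.1 (hle.antisymm (sq_nonneg _))))).symm

end TendstoWeakly

end WeakConvergence

section Prox

variable {f : H → ℝ} {γ γ' : ℝ} {v v' p p' : H}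

/-- `p` is a value of the proximity operator of `γ f` at `v`, that is, it minimizes
`u ↦ f u + ‖v - u‖² / (2γ)`. Being a relation, it presupposes neither existence nor uniqueness of
the minimizer. -/
def IsProx (f : H → ℝ) (γ : ℝ) (v p : H) : Prop :=
  ∀ u : H, f p + 1 / (2 * γ) * ‖v - p‖ ^ 2 ≤ f u + 1 / (2 * γ) * ‖v - u‖ ^ 2

namespace IsProx

lemma inner_le (hp : IsProx f γ v p) (hf : ConvexOn ℝ Set.univ f) (hγ : 0 < γ) (u : H) :
    ⟪v - p, u - p⟫ ≤ γ * (f u - f p) := by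
  have hsegment : ∀ t ∈ Set.Ioo (0 : ℝ) 1,
      ⟪v - p, u - p⟫ ≤ γ * (f u - f p) + t * (‖u - p‖ ^ 2 / 2) := fun t ⟨ht₀, ht₁⟩ => by
    have hmin := hp (p + t • (u - p))
    have hconv := hf.2 (Set.mem_univ p) (Set.mem_univ u) (sub_nonneg.2 ht₁.le) ht₀.le (by ring)
    rw [show (1 - t) • p + t • u = p + t • (u - p) by module, smul_eq_mul, smul_eq_mul] at hconv
    rw [← sub_sub, norm_sub_sq_real (v - p), inner_smul_right, norm_smul,
      Real.norm_of_nonneg ht₀.le] at hmin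
    have hscaled :
        t * ⟪v - p, u - p⟫ ≤ γ * (f (p + t • (u - p)) - f p) + (t * ‖u - p‖) ^ 2 / 2 := by
      field_simp at hmin ⊢
      linarith
    refine le_of_mul_le_mul_left (a := t) ?_ ht₀
    linarith [mul_le_mul_of_nonneg_left hconv hγ.le]
  have hlim : Tendsto (fun t : ℝ => γ * (f u - f p) + t * (‖u - p‖ ^ 2 / 2)) (𝓝[>] 0)
      (𝓝 (γ * (f u - f p) + 0 * (‖u - p‖ ^ 2 / 2))) :=
    (Continuous.tendsto (by fun_prop) 0).mono_left nhdsWithin_le_nhds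
  simpa using ge_of_tendsto hlim (eventually_of_mem (Ioo_mem_nhdsGT one_pos) hsegment)

lemma norm_sub_le (hp : IsProx f γ v p) (hp' : IsProx f γ' v' p') (hf : ConvexOn ℝ Set.univ f)
    (hγ : 0 < γ) (hγ' : 0 < γ') : ‖p' - p‖ ≤ ‖v' - p - (γ' / γ) • (v - p)‖ := by
  have hscaled : γ' / γ * ⟪v - p, p' - p⟫ ≤ γ' * (f p' - f p) := by
    refine (mul_le_mul_of_nonneg_left (hp.inner_le hf hγ p') (by positivity)).trans_eq ?_
    field_simp
  have hother := hp'.inner_le hf hγ' p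
  rw [← neg_sub p' p, inner_neg_right] at hother
  have hsq : ‖p' - p‖ ^ 2 ≤ ⟪v' - p - (γ' / γ) • (v - p), p' - p⟫ := by
    rw [← sub_add_sub_cancel v' p' p, inner_sub_left, inner_add_left, inner_smul_left,
      real_inner_self_eq_norm_sq, RCLike.conj_to_real]
    linarith
  rcases (norm_nonneg (p' - p)).eq_or_lt with h₀ | hpos
  · exact h₀ ▸ norm_nonneg _
  · exact le_of_mul_le_mul_right ((pow_two _).symm.trans_le
      (hsq.trans (real_inner_le_norm _ _))) hpos

lemma norm_sub_sq_add_le {z d y : H} (hy : IsProx f γ (z + γ • d) y) (hf : ConvexOn ℝ Set.univ f)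
    (hγ : 0 < γ) (q : H) :
    ‖y - q‖ ^ 2 + ‖z - y‖ ^ 2 + 2 * γ * (f y - f q - ⟪d, y - q⟫) ≤ ‖z - q‖ ^ 2 := by
  have hprox := hy.inner_le hf hγ q
  rw [← neg_sub y q, inner_neg_right, add_sub_right_comm, inner_add_left, inner_smul_left,
    RCLike.conj_to_real] at hprox
  rw [← sub_add_sub_cancel z y q, norm_add_sq_real]
  linarith

lemma norm_sub_le_of_gradient_step [CompleteSpace H] {h : H → ℝ} {h' : H → H} {K : ℝ≥0}
    {z z' e e' y y' : H} (hy : IsProx f γ (z + γ • (-h' z + e)) y)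
    (hy' : IsProx f γ' (z' + γ' • (-h' z' + e')) y') (hf : ConvexOn ℝ Set.univ f)
    (hh : ConvexOn ℝ Set.univ h) (hg : ∀ x, HasGradientAt h (h' x) x) (hlip : LipschitzWith K h')
    (hγ : 0 < γ) (hγ' : 0 < γ') (hγK : γ' * K ≤ 2) :
    ‖y' - y‖ ≤ ‖z' - z‖ + γ' * ‖e' - e‖ + |1 - γ' / γ| * ‖z - y‖ := by
  have hsplit : z' + γ' • (-h' z' + e') - y - (γ' / γ) • (z + γ • (-h' z + e) - y) =
      z' - z - γ' • (h' z' - h' z) + γ' • (e' - e) + (1 - γ' / γ) • (z - y) := by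
    match_scalars <;> field_simp <;> ring
  calc ‖y' - y‖
      ≤ ‖z' - z - γ' • (h' z' - h' z) + γ' • (e' - e) + (1 - γ' / γ) • (z - y)‖ :=
        hsplit ▸ hy.norm_sub_le hy' hf hγ hγ'
    _ ≤ ‖z' - z - γ' • (h' z' - h' z)‖ + ‖γ' • (e' - e)‖ + ‖(1 - γ' / γ) • (z - y)‖ :=
        norm_add₃_le
    _ ≤ ‖z' - z‖ + γ' * ‖e' - e‖ + |1 - γ' / γ| * ‖z - y‖ := by
        rw [norm_smul, norm_smul, Real.norm_of_nonneg hγ'.le, Real.norm_eq_abs]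
        gcongr
        exact norm_sub_sub_smul_gradient_sub_le hh hg hlip hγ'.le hγK z' z

end IsProx

end Prox

section Parameters

/-- The conditions on the inertial (`θ`), step size (`lam`), momentum (`β`) and anchoring (`α`)
parameters under which the iteration is analysed, with the limits of quotients in (C2)–(C5) and (C7)
written as little-o relations. -/
structure AdmissibleParameters (θ lam β α : ℕ → ℝ) : Prop where
  lam_pos : ∀ n, 0 < lam n
  α_pos : ∀ n, 0 < α n
  α_le_one : ∀ n, α n ≤ 1
  tendsto_lam : Tendsto lam atTop (𝓝 0)
  not_summable_α : ¬ Summable α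
  isLittleO_inv_lam : (fun n => 1 / lam (n + 1) - 1 / lam n) =o[atTop] fun n => α (n + 1)
  isLittleO_α_ratio : (fun n => 1 - α n / α (n + 1)) =o[atTop] fun n => lam (n + 1)
  isLittleO_α : α =o[atTop] lam
  isLittleO_θ : θ =o[atTop] fun n => α (n + 1) * lam (n + 1)
  isLittleO_β : β =o[atTop] fun n => α (n + 1)

namespace AdmissibleParameters

variable {θ lam β α : ℕ → ℝ}

lemma of_tendsto_div (hlam_pos : ∀ n, 0 < lam n) (hα_range : ∀ n, 0 < α n ∧ α n ≤ 1)
    (hlam : Tendsto lam atTop (𝓝 0)) (hα : ¬ Summable α)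
    (hinv_lam : Tendsto (fun n => 1 / α (n + 1) * |1 / lam (n + 1) - 1 / lam n|) atTop (𝓝 0))
    (hα_ratio : Tendsto (fun n => 1 / lam (n + 1) * |1 - α n / α (n + 1)|) atTop (𝓝 0))
    (hα_lam : Tendsto (fun n => α n / lam n) atTop (𝓝 0))
    (hθ : Tendsto (fun n => θ n / (α (n + 1) * lam (n + 1))) atTop (𝓝 0))
    (hβ : Tendsto (fun n => β n / α (n + 1)) atTop (𝓝 0)) : AdmissibleParameters θ lam β α where
  lam_pos := hlam_pos
  α_pos n := (hα_range n).1
  α_le_one n := (hα_range n).2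
  tendsto_lam := hlam
  not_summable_α := hα
  isLittleO_inv_lam := isLittleO_of_tendsto_one_div_mul_abs (fun _ => (hα_range _).1) hinv_lam
  isLittleO_α_ratio := isLittleO_of_tendsto_one_div_mul_abs (fun _ => hlam_pos _) hα_ratio
  isLittleO_α := isLittleO_of_tendsto (fun n hn => absurd hn (hlam_pos n).ne') hα_lam
  isLittleO_θ :=
    isLittleO_of_tendsto (fun _ hn => absurd hn (mul_pos (hα_range _).1 (hlam_pos _)).ne') hθ
  isLittleO_β := isLittleO_of_tendsto (fun _ hn => absurd hn (hα_range _).1.ne') hβ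

variable (hP : AdmissibleParameters θ lam β α)
include hP

lemma tendsto_α : Tendsto α atTop (𝓝 0) := hP.isLittleO_α.trans_tendsto hP.tendsto_lam

lemma tendsto_β : Tendsto β atTop (𝓝 0) :=
  hP.isLittleO_β.trans_tendsto ((tendsto_add_atTop_iff_nat 1).2 hP.tendsto_α)

lemma isLittleO_α_mul_lam_one :
    (fun n => α (n + 1) * lam (n + 1)) =o[atTop] (fun _ => (1 : ℝ)) := by
  rw [isLittleO_one_iff]
  simpa using ((tendsto_add_atTop_iff_nat 1).2 hP.tendsto_α).mul
    ((tendsto_add_atTop_iff_nat 1).2 hP.tendsto_lam)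

lemma isLittleO_α_sub :
    (fun n => α (n + 1) - α n) =o[atTop] fun n => α (n + 1) * lam (n + 1) := by
  refine ((isBigO_refl (fun n => α (n + 1)) atTop).mul_isLittleO hP.isLittleO_α_ratio).congr_left
    fun n => ?_
  rw [mul_sub, mul_one, mul_div_cancel₀ _ (hP.α_pos (n + 1)).ne']

lemma isLittleO_one_sub_lam_ratio :
    (fun n => 1 - lam (n + 1) / lam n) =o[atTop] fun n => α (n + 1) * lam (n + 1) := by
  refine (hP.isLittleO_inv_lam.mul_isBigO (isBigO_refl (fun n => lam (n + 1)) atTop)).congr_left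
    fun n => ?_
  rw [sub_mul, one_div_mul_cancel (hP.lam_pos (n + 1)).ne', one_div_mul_eq_div]

lemma isBigO_α_succ : (fun n => α (n + 1)) =O[atTop] α := by
  have hsub : (fun n => α (n + 1) - α n) =o[atTop] fun n => α (n + 1) := by
    simpa using hP.isLittleO_α_sub.trans_isBigO ((isBigO_refl (fun n => α (n + 1)) atTop).mul
      (((tendsto_add_atTop_iff_nat 1).2 hP.tendsto_lam).isBigO_one ℝ))
  exact IsEquivalent.isBigO (IsEquivalent.symm (hsub.neg_left.congr_left fun n => neg_sub _ _))

lemma isBigO_lam_succ : (fun n => lam (n + 1)) =O[atTop] lam := by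
  have hsub : (fun n => lam (n + 1) - lam n) =o[atTop] lam := by
    refine ((hP.isLittleO_one_sub_lam_ratio.trans hP.isLittleO_α_mul_lam_one).neg_left.mul_isBigO
      (isBigO_refl lam atTop)).congr (fun n => ?_) fun n => one_mul _
    rw [neg_sub, sub_mul, div_mul_cancel₀ _ (hP.lam_pos n).ne', one_mul]
  exact IsEquivalent.isBigO hsub

lemma isBigO_α_mul_lam_succ : (fun n => α (n + 1 + 1) * lam (n + 1 + 1)) =O[atTop]
    fun n => α (n + 1) * lam (n + 1) :=
  (hP.isBigO_α_succ.mul hP.isBigO_lam_succ).comp_tendsto (tendsto_add_atTop_nat 1)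

lemma isLittleO_lam_of_recurrence {s e : ℕ → ℝ} (hs : ∀ n, 0 ≤ s n)
    (hs_bdd : s =O[atTop] (1 : ℕ → ℝ)) (he : e =o[atTop] fun n => α (n + 1) * lam (n + 1))
    (hrec : ∀ᶠ n in atTop, s (n + 1) ≤ (1 - α (n + 1)) * s n + e n) : s =o[atTop] lam := by
  set E : ℕ → ℝ := fun n =>
    (1 - α (n + 1)) * s n * (1 / lam (n + 1) - 1 / lam n) + e n / lam (n + 1)
  have hfactor : (fun n => (1 - α (n + 1)) * s n) =O[atTop] (1 : ℕ → ℝ) :=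
    (((((tendsto_add_atTop_iff_nat 1).2 hP.tendsto_α).const_sub 1).isBigO_one ℝ).mul
      hs_bdd).congr_right fun _ => one_mul _
  have he_div : (fun n => e n / lam (n + 1)) =o[atTop] fun n => α (n + 1) :=
    (he.mul_isBigO (isBigO_refl (fun n => (lam (n + 1))⁻¹) atTop)).congr
      (fun n => (div_eq_mul_inv _ _).symm) fun n => mul_inv_cancel_right₀ (hP.lam_pos _).ne' _
  have hE : E =o[atTop] fun n => α (n + 1) :=
    ((hfactor.mul_isLittleO hP.isLittleO_inv_lam).congr_right fun _ => one_mul _).add he_div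
  have hrec_div : ∀ᶠ n in atTop,
      s (n + 1) / lam (n + 1) ≤ (1 - α (n + 1)) * (s n / lam n) + E n := by
    filter_upwards [hrec] with n hn
    refine (div_le_div_of_nonneg_right hn (hP.lam_pos _).le).trans_eq ?_
    simp only [E]
    ring
  refine isLittleO_of_tendsto (fun n hn => absurd hn (hP.lam_pos n).ne') ?_
  exact tendsto_zero_of_le_one_sub_mul_add (fun n => div_nonneg (hs n) (hP.lam_pos n).le)
    (fun n => (hP.α_pos _).le) (fun n => hP.α_le_one _)
    (fun hsum => hP.not_summable_α ((summable_nat_add_iff 1).1 hsum)) hE hrec_div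

end AdmissibleParameters

end Parameters

section Run

variable {ι : Type*} {I : Finset ι} {f h : ι → H → ℝ} {h' T : ι → H → H} {K : ι → ℝ≥0} {u : ι → H}
  {θ lam β α : ℕ → ℝ} {x z : ℕ → H} {d y w : ℕ → ι → H}

/-- The sequences `x z d y w` form a run of the parallel inertial splitting iteration for the
functions `f i`, the gradients `h' i`, the mappings `T i` and the anchors `u i`, `i ∈ I`. Here
`w n i` stands for the iterate `w_n^(i+1)`. -/
structure IsSplittingRun (I : Finset ι) (f : ι → H → ℝ) (h' T : ι → H → H) (u : ι → H)
    (θ lam β α : ℕ → ℝ) (x z : ℕ → H) (d y w : ℕ → ι → H) : Prop where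
  z_eq : ∀ n ≥ 1, z n = x n + θ n • (x n - x (n - 1))
  d_succ : ∀ n ≥ 1, ∀ i ∈ I, d (n + 1) i = -h' i (z n) + β n • d n i
  isProx_y : ∀ n ≥ 1, ∀ i ∈ I, IsProx (f i) (lam n) (z n + lam n • d (n + 1) i) (y n i)
  w_eq : ∀ n ≥ 1, ∀ i ∈ I, w n i = α n • u i + (1 - α n) • T i (y n i)
  x_succ : ∀ n ≥ 1, x (n + 1) = (I.card : ℝ)⁻¹ • ∑ i ∈ I, w n i

/-- The sequences `x` and `z` of a run, and the components of `d` and `y` indexed by `I`, are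
bounded. -/
structure IsBoundedRun (I : Finset ι) (x z : ℕ → H) (d y : ℕ → ι → H) : Prop where
  isBigO_x : x =O[atTop] (1 : ℕ → ℝ)
  isBigO_z : z =O[atTop] (1 : ℕ → ℝ)
  isBigO_d : ∀ i ∈ I, (fun n => d n i) =O[atTop] (1 : ℕ → ℝ)
  isBigO_y : ∀ i ∈ I, (fun n => y n i) =O[atTop] (1 : ℕ → ℝ)

lemma IsBoundedRun.isLittleO_momentum (hbdd : IsBoundedRun I x z d y)
    (hP : AdmissibleParameters θ lam β α) {i : ι} (hi : i ∈ I) :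
    (fun n => lam (n + 1) * ‖β (n + 1) • d (n + 1) i - β n • d n i‖) =o[atTop]
      fun n => α (n + 1) * lam (n + 1) := by
  have hterm : (fun n => β n • d n i) =o[atTop] fun n => α (n + 1) :=
    (hP.isLittleO_β.smul_isBigO (hbdd.isBigO_d i hi)).congr_right fun _ => mul_one _
  have hterm_succ : (fun n => β (n + 1) • d (n + 1) i) =o[atTop] fun n => α (n + 1) :=
    (hterm.comp_tendsto (tendsto_add_atTop_nat 1)).trans_isBigO
      (hP.isBigO_α_succ.comp_tendsto (tendsto_add_atTop_nat 1))
  exact ((isBigO_refl (fun n => lam (n + 1)) atTop).mul_isLittleO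
    (hterm_succ.sub hterm).norm_left).congr_right fun _ => mul_comm _ _

namespace IsSplittingRun

variable (hrun : IsSplittingRun I f h' T u θ lam β α x z d y w)
  (hP : AdmissibleParameters θ lam β α)
include hrun hP

lemma isBigO_x (hT : ∀ i ∈ I, LipschitzWith 1 (T i))
    (hy : ∀ i ∈ I, (fun n => y n i) =O[atTop] (1 : ℕ → ℝ)) : x =O[atTop] (1 : ℕ → ℝ) := by
  have hw : ∀ i ∈ I, (fun n => w n i) =O[atTop] (1 : ℕ → ℝ) := fun i hi => by
    have hanchor : (fun n => α n • u i) =O[atTop] (1 : ℕ → ℝ) :=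
      (hP.tendsto_α.smul_const (u i)).isBigO_one ℝ
    have hmap : (fun n => (1 - α n) • T i (y n i)) =O[atTop] (1 : ℕ → ℝ) :=
      (((hP.tendsto_α.const_sub 1).isBigO_one ℝ).smul
        (isBigO_one_comp_of_lipschitzWith_s16 (hT i hi) (hy i hi))).congr_right fun _ => one_mul _
    refine (hanchor.add hmap).congr' ?_ .rfl
    filter_upwards [eventually_ge_atTop 1] with n hn
    exact (hrun.w_eq n hn i hi).symm
  have hsucc : (fun n => x (n + 1)) =O[atTop] (1 : ℕ → ℝ) := by
    refine ((IsBigO.fun_sum hw).const_smul_left (I.card : ℝ)⁻¹).congr' ?_ .rfl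
    filter_upwards [eventually_ge_atTop 1] with n hn
    exact (hrun.x_succ n hn).symm
  rw [← map_add_atTop_eq_nat 1]
  exact isBigO_map.2 hsucc

lemma isLittleO_z_sub_x (hx : x =O[atTop] (1 : ℕ → ℝ)) :
    (fun n => z n - x n) =o[atTop] fun n => α (n + 1) * lam (n + 1) := by
  have hdiff : (fun n => x n - x (n - 1)) =O[atTop] (1 : ℕ → ℝ) :=
    hx.sub (hx.comp_tendsto (tendsto_sub_atTop_nat 1))
  refine (hP.isLittleO_θ.smul_isBigO hdiff).congr' ?_ (.of_forall fun _ => mul_one _)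
  filter_upwards [eventually_ge_atTop 1] with n hn
  rw [hrun.z_eq n hn, add_sub_cancel_left]

lemma tendsto_z_sub_x (hx : x =O[atTop] (1 : ℕ → ℝ)) :
    Tendsto (fun n => z n - x n) atTop (𝓝 0) :=
  (isLittleO_one_iff ℝ).1 ((hrun.isLittleO_z_sub_x hP hx).trans hP.isLittleO_α_mul_lam_one)

lemma tendstoWeakly_z (hx : x =O[atTop] (1 : ℕ → ℝ)) {l : Filter ℕ} (hl : l ≤ atTop) {p : H}
    (hp : TendstoWeakly x l p) : TendstoWeakly z l p :=
  hp.of_tendsto_sub_zero ((hrun.tendsto_z_sub_x hP hx).mono_left hl)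

lemma isBoundedRun (hh_lip : ∀ i ∈ I, LipschitzWith (K i) (h' i))
    (hT : ∀ i ∈ I, LipschitzWith 1 (T i))
    (hy : ∀ i ∈ I, (fun n => y n i) =O[atTop] (1 : ℕ → ℝ)) : IsBoundedRun I x z d y := by
  have hx := hrun.isBigO_x hP hT hy
  have hz : z =O[atTop] (1 : ℕ → ℝ) := by
    simpa using hx.add ((hrun.tendsto_z_sub_x hP hx).isBigO_one ℝ)
  refine ⟨hx, hz, fun i hi => ?_, hy⟩
  refine isBigO_one_of_recurrence hP.tendsto_β
    (isBigO_one_comp_of_lipschitzWith_s16 (hh_lip i hi) hz).neg_left ?_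
  filter_upwards [eventually_ge_atTop 1] with n hn
  exact hrun.d_succ n hn i hi

section AsymptoticRegularity

variable [CompleteSpace H] (hbdd : IsBoundedRun I x z d y)
include hbdd

lemma exists_norm_y_succ_sub_le {i : ι} (hi : i ∈ I) (hf : ConvexOn ℝ Set.univ (f i))
    (hh : ConvexOn ℝ Set.univ (h i)) (hg : ∀ a, HasGradientAt (h i) (h' i a) a)
    (hlip : LipschitzWith (K i) (h' i)) :
    ∃ e : ℕ → ℝ, e =o[atTop] (fun n => α (n + 1) * lam (n + 1)) ∧
      ∀ᶠ n in atTop, ‖y (n + 1) i - y n i‖ ≤ ‖x (n + 1) - x n‖ + e n := by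
  have hz_sub_x := (hrun.isLittleO_z_sub_x hP hbdd.isBigO_x).norm_left
  have hz_sub_x_succ := (hz_sub_x.comp_tendsto (tendsto_add_atTop_nat 1)).trans_isBigO
    hP.isBigO_α_mul_lam_succ
  have hratio : (fun n => |1 - lam (n + 1) / lam n| * ‖z n - y n i‖) =o[atTop]
      fun n => α (n + 1) * lam (n + 1) :=
    (hP.isLittleO_one_sub_lam_ratio.abs_left.mul_isBigO
      (hbdd.isBigO_z.sub (hbdd.isBigO_y i hi)).norm_left).congr_right fun _ => mul_one _
  refine ⟨_, ((hz_sub_x_succ.add hz_sub_x).add (hbdd.isLittleO_momentum hP hi)).add hratio, ?_⟩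
  have hlam_small : ∀ᶠ n in atTop, lam (n + 1) * K i ≤ 2 := by
    have hlim := ((tendsto_add_atTop_iff_nat 1).2 hP.tendsto_lam).mul_const (K i : ℝ)
    exact (hlim.eventually_lt_const (by simp)).mono fun _ => le_of_lt
  filter_upwards [eventually_ge_atTop 1, hlam_small] with n hn hγK
  have hstep := (hrun.d_succ n hn i hi ▸ hrun.isProx_y n hn i hi).norm_sub_le_of_gradient_step
    (hrun.d_succ (n + 1) (by lia) i hi ▸ hrun.isProx_y (n + 1) (by lia) i hi) hf hh hg hlip
    (hP.lam_pos n) (hP.lam_pos (n + 1)) hγK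
  have hz : ‖z (n + 1) - z n‖ ≤
      ‖x (n + 1) - x n‖ + ‖z (n + 1) - x (n + 1)‖ + ‖z n - x n‖ := calc
    _ = ‖x (n + 1) - x n + (z (n + 1) - x (n + 1)) + (x n - z n)‖ := by congr 1; abel
    _ ≤ _ := by rw [norm_sub_rev (z n)]; exact norm_add₃_le
  simp only [Function.comp_apply]
  linarith

lemma exists_norm_w_succ_sub_le {i : ι} (hi : i ∈ I) (hf : ConvexOn ℝ Set.univ (f i))
    (hh : ConvexOn ℝ Set.univ (h i)) (hg : ∀ a, HasGradientAt (h i) (h' i a) a)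
    (hlip : LipschitzWith (K i) (h' i)) (hT : LipschitzWith 1 (T i)) :
    ∃ e : ℕ → ℝ, e =o[atTop] (fun n => α (n + 1) * lam (n + 1)) ∧
      ∀ᶠ n in atTop,
        ‖w (n + 1) i - w n i‖ ≤ (1 - α (n + 1)) * ‖x (n + 1) - x n‖ + e n := by
  obtain ⟨e, he, hy⟩ := exists_norm_y_succ_sub_le hrun hP hbdd hi hf hh hg hlip
  have hanchor : (fun n => |α (n + 1) - α n| * ‖u i - T i (y n i)‖) =o[atTop]
      fun n => α (n + 1) * lam (n + 1) :=
    (hP.isLittleO_α_sub.abs_left.mul_isBigO ((isBigO_const_const (u i) one_ne_zero _).sub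
      (isBigO_one_comp_of_lipschitzWith_s16 hT (hbdd.isBigO_y i hi))).norm_left).congr_right
      fun _ => mul_one _
  refine ⟨_, hanchor.add he.abs_left, ?_⟩
  filter_upwards [eventually_ge_atTop 1, hy] with n hn hyn
  have hα : 0 ≤ 1 - α (n + 1) := sub_nonneg.2 (hP.α_le_one _)
  have hTy : ‖T i (y (n + 1) i) - T i (y n i)‖ ≤ ‖y (n + 1) i - y n i‖ := by
    simpa using hT.norm_sub_le (y (n + 1) i) (y n i)
  calc ‖w (n + 1) i - w n i‖
      = ‖(α (n + 1) - α n) • (u i - T i (y n i)) +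
          (1 - α (n + 1)) • (T i (y (n + 1) i) - T i (y n i))‖ := by
        rw [hrun.w_eq n hn i hi, hrun.w_eq (n + 1) (by lia) i hi]
        congr 1
        module
    _ ≤ |α (n + 1) - α n| * ‖u i - T i (y n i)‖ +
          (1 - α (n + 1)) * ‖T i (y (n + 1) i) - T i (y n i)‖ := by
        refine (norm_add_le _ _).trans_eq ?_
        rw [norm_smul, norm_smul, Real.norm_of_nonneg hα, Real.norm_eq_abs]
    _ ≤ |α (n + 1) - α n| * ‖u i - T i (y n i)‖ +
          (1 - α (n + 1)) * (‖x (n + 1) - x n‖ + e n) := by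
        gcongr
        exact hTy.trans hyn
    _ ≤ (1 - α (n + 1)) * ‖x (n + 1) - x n‖ +
          (|α (n + 1) - α n| * ‖u i - T i (y n i)‖ + |e n|) := by
        nlinarith [le_abs_self (e n), abs_nonneg (e n), hP.α_pos (n + 1)]

lemma isLittleO_x_succ_sub (hf : ∀ i ∈ I, ConvexOn ℝ Set.univ (f i))
    (hh : ∀ i ∈ I, ConvexOn ℝ Set.univ (h i))
    (hg : ∀ i ∈ I, ∀ a, HasGradientAt (h i) (h' i a) a)
    (hlip : ∀ i ∈ I, LipschitzWith (K i) (h' i)) (hT : ∀ i ∈ I, LipschitzWith 1 (T i)) :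
    (fun n => x (n + 1) - x n) =o[atTop] lam := by
  choose! e he hw using fun i hi => exists_norm_w_succ_sub_le hrun hP hbdd hi (hf i hi) (hh i hi)
    (hg i hi) (hlip i hi) (hT i hi)
  have hx_bdd : (fun n => ‖x (n + 1) - x n‖) =O[atTop] (1 : ℕ → ℝ) :=
    ((hbdd.isBigO_x.comp_tendsto (tendsto_add_atTop_nat 1)).sub hbdd.isBigO_x).norm_left
  refine isLittleO_norm_left.1 <| hP.isLittleO_lam_of_recurrence (fun n => norm_nonneg _) hx_bdd
    ((IsLittleO.fun_sum he).const_mul_left (I.card : ℝ)⁻¹) ?_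
  filter_upwards [eventually_ge_atTop 1, (Finset.eventually_all I).2 hw] with n hn hwn
  have hα : 0 ≤ 1 - α (n + 1) := sub_nonneg.2 (hP.α_le_one _)
  calc ‖x (n + 1 + 1) - x (n + 1)‖
      = ‖(I.card : ℝ)⁻¹ • ∑ i ∈ I, (w (n + 1) i - w n i)‖ := by
        rw [hrun.x_succ n hn, hrun.x_succ (n + 1) (by lia), Finset.sum_sub_distrib, smul_sub]
    _ ≤ (I.card : ℝ)⁻¹ * ∑ i ∈ I, ((1 - α (n + 1)) * ‖x (n + 1) - x n‖ + e i n) :=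
        (norm_inv_card_smul_sum_le I _).trans (by gcongr with i hi; exact hwn i hi)
    _ = (I.card : ℝ)⁻¹ * I.card * ((1 - α (n + 1)) * ‖x (n + 1) - x n‖) +
          (I.card : ℝ)⁻¹ * ∑ i ∈ I, e i n := by
        rw [Finset.sum_add_distrib, Finset.sum_const, nsmul_eq_mul]
        ring
    _ ≤ (1 - α (n + 1)) * ‖x (n + 1) - x n‖ + (I.card : ℝ)⁻¹ * ∑ i ∈ I, e i n :=
        add_le_add_left (mul_le_of_le_one_left (mul_nonneg hα (norm_nonneg _)) inv_mul_le_one) _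

end AsymptoticRegularity

section Energy

variable {q : H}

lemma norm_w_sub_sq_add_le {i : ι} (hi : i ∈ I) (hf : ConvexOn ℝ Set.univ (f i))
    (hT : LipschitzWith 1 (T i)) (hq : T i q = q) {n : ℕ} (hn : 1 ≤ n) :
    ‖w n i - q‖ ^ 2 + ‖z n - y n i‖ ^ 2 +
        2 * lam n * (f i (y n i) - f i q - ⟪d (n + 1) i, y n i - q⟫) ≤
      ‖z n - q‖ ^ 2 + α n * ‖u i - q‖ ^ 2 := by
  have hα₀ : 0 ≤ α n := (hP.α_pos n).le
  have hα₁ : 0 ≤ 1 - α n := sub_nonneg.2 (hP.α_le_one n)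
  have hTy : ‖T i (y n i) - q‖ ≤ ‖y n i - q‖ := by
    simpa [hq] using hT.norm_sub_le (y n i) q
  have hw : ‖w n i - q‖ ≤ α n * ‖u i - q‖ + (1 - α n) * ‖y n i - q‖ := calc
    _ = ‖α n • (u i - q) + (1 - α n) • (T i (y n i) - q)‖ := by
      rw [hrun.w_eq n hn i hi]
      congr 1
      module
    _ ≤ α n * ‖u i - q‖ + (1 - α n) * ‖T i (y n i) - q‖ := by
      refine (norm_add_le _ _).trans_eq ?_
      rw [norm_smul, norm_smul, Real.norm_of_nonneg hα₀, Real.norm_of_nonneg hα₁]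
    _ ≤ _ := by gcongr
  have hw_sq : ‖w n i - q‖ ^ 2 ≤ α n * ‖u i - q‖ ^ 2 + ‖y n i - q‖ ^ 2 := calc
    _ ≤ (α n * ‖u i - q‖ + (1 - α n) * ‖y n i - q‖) ^ 2 := by gcongr
    _ ≤ α n * ‖u i - q‖ ^ 2 + (1 - α n) * ‖y n i - q‖ ^ 2 := by
      nlinarith [mul_nonneg (mul_nonneg hα₀ hα₁) (sq_nonneg (‖u i - q‖ - ‖y n i - q‖))]
    _ ≤ _ := by nlinarith [sq_nonneg ‖y n i - q‖]
  linarith [(hrun.isProx_y n hn i hi).norm_sub_sq_add_le hf (hP.lam_pos n) q]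

variable (hbdd : IsBoundedRun I x z d y) (hreg : (fun n => x (n + 1) - x n) =o[atTop] lam)
include hbdd hreg

lemma isLittleO_z_sub_x_succ : (fun n => z n - x (n + 1)) =o[atTop] lam := by
  have hrate : (fun n => α (n + 1) * lam (n + 1)) =O[atTop] lam := by
    simpa using (((tendsto_add_atTop_iff_nat 1).2 hP.tendsto_α).isBigO_one ℝ).mul
      hP.isBigO_lam_succ
  refine (((hrun.isLittleO_z_sub_x hP hbdd.isBigO_x).trans_isBigO hrate).sub hreg).congr_left
    fun n => ?_
  abel

lemma isLittleO_norm_z_sub_sq_sub (q : H) :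
    (fun n => ‖z n - q‖ ^ 2 - ‖x (n + 1) - q‖ ^ 2) =o[atTop] lam := by
  have hdiff : (fun n => ‖z n - q‖ - ‖x (n + 1) - q‖) =o[atTop] lam := by
    refine (IsBigO.of_norm_le fun n => ?_).trans_isLittleO
      (hrun.isLittleO_z_sub_x_succ hP hbdd hreg).norm_left
    simpa using abs_norm_sub_norm_le (z n - q) (x (n + 1) - q)
  have hq : (fun _ : ℕ => q) =O[atTop] (1 : ℕ → ℝ) := isBigO_const_const q one_ne_zero _
  have hsum : (fun n => ‖z n - q‖ + ‖x (n + 1) - q‖) =O[atTop] (1 : ℕ → ℝ) :=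
    (hbdd.isBigO_z.sub hq).norm_left.add
      ((hbdd.isBigO_x.comp_tendsto (tendsto_add_atTop_nat 1)).sub hq).norm_left
  refine (hsum.mul_isLittleO hdiff).congr (fun n => ?_) fun n => one_mul _
  ring

variable (hf : ∀ i ∈ I, ConvexOn ℝ Set.univ (f i)) (hT : ∀ i ∈ I, LipschitzWith 1 (T i))
  (hq : ∀ i ∈ I, T i q = q)
include hf hT hq

lemma exists_isLittleO_sum_energy_le :
    ∃ r : ℕ → ℝ, r =o[atTop] lam ∧ ∀ n ≥ 1,
      ∑ i ∈ I, (‖w n i - x (n + 1)‖ ^ 2 + ‖z n - y n i‖ ^ 2) +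
        2 * lam n * ∑ i ∈ I, (f i (y n i) - f i q - ⟪d (n + 1) i, y n i - q⟫) ≤ r n := by
  refine ⟨fun n => I.card * (‖z n - q‖ ^ 2 - ‖x (n + 1) - q‖ ^ 2) +
    (∑ i ∈ I, ‖u i - q‖ ^ 2) * α n,
    ((hrun.isLittleO_norm_z_sub_sq_sub hP hbdd hreg q).const_mul_left _).add
      (hP.isLittleO_α.const_mul_left _), fun n hn => ?_⟩
  have hsum := Finset.sum_le_sum fun i hi =>
    hrun.norm_w_sub_sq_add_le hP hi (hf i hi) (hT i hi) (hq i hi) hn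
  have hvariance := sum_norm_sub_sq_eq_add I (w n) q
  rw [← hrun.x_succ n hn] at hvariance
  simp only [Finset.sum_add_distrib, Finset.sum_const, nsmul_eq_mul, ← Finset.mul_sum] at hsum ⊢
  linarith

lemma tendsto_sum_sq_residual [CompleteSpace H] (hf_lsc : ∀ i ∈ I, LowerSemicontinuous (f i)) :
    Tendsto (fun n => ∑ i ∈ I, (‖w n i - x (n + 1)‖ ^ 2 + ‖z n - y n i‖ ^ 2)) atTop (𝓝 0) := by
  obtain ⟨r, hr, hr_le⟩ := hrun.exists_isLittleO_sum_energy_le hP hbdd hreg hf hT hq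
  choose! s hs using fun i hi =>
    exists_add_inner_le_of_lt (hf i hi) (hf_lsc i hi) (sub_one_lt (f i q))
  have hlower : (fun n => ∑ i ∈ I, (-1 + ⟪s i - d (n + 1) i, y n i - q⟫)) =O[atTop]
      (1 : ℕ → ℝ) := IsBigO.fun_sum fun i hi => by
    have hd_succ : (fun n => s i - d (n + 1) i) =O[atTop] (1 : ℕ → ℝ) :=
      (isBigO_const_const (s i) one_ne_zero _).sub
        ((hbdd.isBigO_d i hi).comp_tendsto (tendsto_add_atTop_nat 1))
    have hy : (fun n => y n i - q) =O[atTop] (1 : ℕ → ℝ) :=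
      (hbdd.isBigO_y i hi).sub (isBigO_const_const q one_ne_zero _)
    exact (isBigO_const_const (-1 : ℝ) one_ne_zero _).add <|
      ((isBigO_inner_norm_mul_norm _ _ _).trans (hd_succ.norm_left.mul hy.norm_left)).congr_right
        fun _ => one_mul _
  have hbound : Tendsto (fun n => r n - 2 * (lam n *
      ∑ i ∈ I, (-1 + ⟪s i - d (n + 1) i, y n i - q⟫))) atTop (𝓝 0) := by
    have hlam : lam =o[atTop] (1 : ℕ → ℝ) := (isLittleO_one_iff ℝ).2 hP.tendsto_lam
    exact (isLittleO_one_iff ℝ).1 <| (hr.trans hlam).sub <|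
      ((hlam.mul_isBigO hlower).const_mul_left 2).congr_right fun _ => one_mul _
  refine squeeze_zero' (.of_forall fun n => by positivity) ?_ hbound
  filter_upwards [eventually_ge_atTop 1] with n hn
  have hgap : ∑ i ∈ I, (-1 + ⟪s i - d (n + 1) i, y n i - q⟫) ≤
      ∑ i ∈ I, (f i (y n i) - f i q - ⟪d (n + 1) i, y n i - q⟫) :=
    Finset.sum_le_sum fun i hi => by
      rw [inner_sub_left]
      linarith [hs i hi (y n i)]
  nlinarith [hr_le n hn, hP.lam_pos n]

section Residuals

variable [CompleteSpace H] (hf_lsc : ∀ i ∈ I, LowerSemicontinuous (f i))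
include hf_lsc

lemma tendsto_w_sub_x_succ {i : ι} (hi : i ∈ I) :
    Tendsto (fun n => w n i - x (n + 1)) atTop (𝓝 0) :=
  tendsto_zero_of_norm_sq_le (fun n => (le_add_of_nonneg_right (sq_nonneg ‖z n - y n i‖)).trans <|
      Finset.single_le_sum (f := fun i => ‖w n i - x (n + 1)‖ ^ 2 + ‖z n - y n i‖ ^ 2)
        (fun _ _ => by positivity) hi)
    (hrun.tendsto_sum_sq_residual hP hbdd hreg hf hT hq hf_lsc)

lemma tendsto_z_sub_y {i : ι} (hi : i ∈ I) : Tendsto (fun n => z n - y n i) atTop (𝓝 0) :=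
  tendsto_zero_of_norm_sq_le
    (fun n => (le_add_of_nonneg_left (sq_nonneg ‖w n i - x (n + 1)‖)).trans <|
      Finset.single_le_sum (f := fun i => ‖w n i - x (n + 1)‖ ^ 2 + ‖z n - y n i‖ ^ 2)
        (fun _ _ => by positivity) hi)
    (hrun.tendsto_sum_sq_residual hP hbdd hreg hf hT hq hf_lsc)

lemma tendsto_T_y_sub_y {i : ι} (hi : i ∈ I) :
    Tendsto (fun n => T i (y n i) - y n i) atTop (𝓝 0) := by
  have hanchor : Tendsto (fun n => α n • (T i (y n i) - u i)) atTop (𝓝 0) :=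
    hP.tendsto_α.zero_smul_isBoundedUnder_le <| (isBigO_one_iff ℝ).1 <|
      (isBigO_one_comp_of_lipschitzWith_s16 (hT i hi) (hbdd.isBigO_y i hi)).sub
        (isBigO_const_const (u i) one_ne_zero _)
  have hz_sub_x_succ : Tendsto (fun n => z n - x (n + 1)) atTop (𝓝 0) :=
    (hrun.isLittleO_z_sub_x_succ hP hbdd hreg).trans_tendsto hP.tendsto_lam
  have hsum := ((hanchor.add (hrun.tendsto_w_sub_x_succ hP hbdd hreg hf hT hq hf_lsc hi)).sub
    hz_sub_x_succ).add (hrun.tendsto_z_sub_y hP hbdd hreg hf hT hq hf_lsc hi)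
  rw [add_zero, sub_zero, add_zero] at hsum
  refine hsum.congr' ?_
  filter_upwards [eventually_ge_atTop 1] with n hn
  rw [hrun.w_eq n hn i hi]
  module

lemma exists_tendsto_zero_sum_add_le (hh : ∀ i ∈ I, ConvexOn ℝ Set.univ (h i))
    (hg : ∀ i ∈ I, ∀ a, HasGradientAt (h i) (h' i a) a)
    (hlip : ∀ i ∈ I, LipschitzWith (K i) (h' i)) :
    ∃ ε : ℕ → ℝ, Tendsto ε atTop (𝓝 0) ∧ ∀ n ≥ 1,
      ∑ i ∈ I, (f i (y n i) + h i (z n)) ≤ ∑ i ∈ I, (f i q + h i q) + ε n := by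
  obtain ⟨r, hr, hr_le⟩ := hrun.exists_isLittleO_sum_energy_le hP hbdd hreg hf hT hq
  have hgrad : ∀ i ∈ I, Tendsto (fun n => ⟪h' i (z n), z n - y n i⟫) atTop (𝓝 0) := fun i hi =>
    tendsto_inner_zero_of_isBigO_one (isBigO_one_comp_of_lipschitzWith_s16 (hlip i hi) hbdd.isBigO_z)
      (hrun.tendsto_z_sub_y hP hbdd hreg hf hT hq hf_lsc hi)
  have hmomentum : ∀ i ∈ I, Tendsto (fun n => ⟪y n i - q, β n • d n i⟫) atTop (𝓝 0) :=
    fun i hi => tendsto_inner_zero_of_isBigO_one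
      ((hbdd.isBigO_y i hi).sub (isBigO_const_const q one_ne_zero _))
      (hP.tendsto_β.zero_smul_isBoundedUnder_le ((isBigO_one_iff ℝ).1 (hbdd.isBigO_d i hi)))
  refine ⟨fun n => r n / lam n / 2 +
    ∑ i ∈ I, (⟪h' i (z n), z n - y n i⟫ + ⟪y n i - q, β n • d n i⟫), ?_, fun n hn => ?_⟩
  · simpa using (hr.tendsto_div_nhds_zero.div_const 2).add
      (tendsto_finsetSum I fun i hi => (hgrad i hi).add (hmomentum i hi))
  have hgap : ∑ i ∈ I, (f i (y n i) - f i q - ⟪d (n + 1) i, y n i - q⟫) ≤ r n / lam n / 2 := by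
    rw [div_div, le_div_iff₀ (mul_pos (hP.lam_pos n) two_pos)]
    have : 0 ≤ ∑ i ∈ I, (‖w n i - x (n + 1)‖ ^ 2 + ‖z n - y n i‖ ^ 2) := by positivity
    linarith [hr_le n hn]
  have hterm : ∀ i ∈ I, f i (y n i) + h i (z n) ≤
      f i q + h i q + (f i (y n i) - f i q - ⟪d (n + 1) i, y n i - q⟫) +
        (⟪h' i (z n), z n - y n i⟫ + ⟪y n i - q, β n • d n i⟫) := fun i hi => by
    have hh_le := add_inner_gradient_le (hh i hi) (hg i hi (z n)) q
    have hsplit : ⟪h' i (z n), q - z n⟫ =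
        -⟪h' i (z n), y n i - q⟫ - ⟪h' i (z n), z n - y n i⟫ := by
      rw [← inner_neg_right, ← inner_sub_right]
      congr 1
      abel
    rw [hrun.d_succ n hn i hi, inner_add_left, inner_neg_left, real_inner_comm _ (β n • d n i)]
    linarith
  have hsum := Finset.sum_le_sum hterm
  simp only [Finset.sum_add_distrib] at hsum hgap ⊢
  linarith

variable {p : H} {l : Filter ℕ} (hl : l ≤ atTop) (hp : TendstoWeakly x l p)
include hl hp

lemma tendstoWeakly_y {i : ι} (hi : i ∈ I) : TendstoWeakly (fun n => y n i) l p := by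
  have hz := hrun.tendstoWeakly_z hP hbdd.isBigO_x hl hp
  have hzy := (hrun.tendsto_z_sub_y hP hbdd hreg hf hT hq hf_lsc hi).mono_left hl
  exact hz.of_tendsto_sub_zero (by simpa using hzy.neg)

lemma apply_eq_self_of_tendstoWeakly [l.NeBot] {i : ι} (hi : i ∈ I) : T i p = p :=
  (hrun.tendstoWeakly_y hP hbdd hreg hf hT hq hf_lsc hl hp hi).apply_eq_self_of_nonexpansive
    (hT i hi) ((hbdd.isBigO_y i hi).mono hl)
    ((hrun.tendsto_T_y_sub_y hP hbdd hreg hf hT hq hf_lsc hi).mono_left hl)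

lemma sum_le_sum_of_tendstoWeakly [l.NeBot] (hh : ∀ i ∈ I, ConvexOn ℝ Set.univ (h i))
    (hg : ∀ i ∈ I, ∀ a, HasGradientAt (h i) (h' i a) a)
    (hlip : ∀ i ∈ I, LipschitzWith (K i) (h' i)) :
    ∑ i ∈ I, (f i p + h i p) ≤ ∑ i ∈ I, (f i q + h i q) := by
  obtain ⟨ε, hε, hle⟩ :=
    hrun.exists_tendsto_zero_sum_add_le hP hbdd hreg hf hT hq hf_lsc hh hg hlip
  have hz := hrun.tendstoWeakly_z hP hbdd.isBigO_x hl hp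
  have hlim : Tendsto (fun n => ∑ i ∈ I, (f i q + h i q) + ε n) l
      (𝓝 (∑ i ∈ I, (f i q + h i q))) := by
    simpa using (hε.mono_left hl).const_add (∑ i ∈ I, (f i q + h i q))
  refine le_of_forall_lt_imp_le_of_dense fun a ha => ge_of_tendsto hlim ?_
  have hlower : ∀ᶠ n in l, a < ∑ i ∈ I, (f i (y n i) + h i (z n)) :=
    eventually_lt_sum (fun i hi b hb => eventually_lt_add
      (fun c hc => (hrun.tendstoWeakly_y hP hbdd hreg hf hT hq hf_lsc hl hp hi).eventually_lt
        (hf i hi) (hf_lsc i hi) hc)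
      (fun c hc => hz.eventually_lt (hh i hi)
        (fun v => (hg i hi v).continuousAt.lowerSemicontinuousAt) hc) hb) ha
  filter_upwards [hlower, hl (eventually_ge_atTop 1)] with n hn hn₁
  exact hn.le.trans (hle n hn₁)

end Residuals

end Energy

end IsSplittingRun

end Run

end HilbertSpace

theorem alg2_weak_cluster_points_in_Omega_general
    {H ι : Type*} [NormedAddCommGroup H] [InnerProductSpace ℝ H] [CompleteSpace H]
    {I : Finset ι} {f h : ι → H → ℝ} {h' T : ι → H → H} {K : ι → ℝ≥0} {u : ι → H}
    {θ lam β α : ℕ → ℝ} {x z : ℕ → H} {d y w : ℕ → ι → H}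
    (hf : ∀ i ∈ I, ConvexOn ℝ Set.univ (f i)) (hf_lsc : ∀ i ∈ I, LowerSemicontinuous (f i))
    (hh : ∀ i ∈ I, ConvexOn ℝ Set.univ (h i))
    (hg : ∀ i ∈ I, ∀ a, HasGradientAt (h i) (h' i a) a)
    (hlip : ∀ i ∈ I, LipschitzWith (K i) (h' i)) (hT : ∀ i ∈ I, LipschitzWith 1 (T i))
    (hT_fix : ∃ q, ∀ i ∈ I, T i q = q) (hP : AdmissibleParameters θ lam β α)
    (hrun : IsSplittingRun I f h' T u θ lam β α x z d y w)
    (hy_bdd : ∀ i ∈ I, (fun n => y n i) =O[atTop] (1 : ℕ → ℝ))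
    {l : Filter ℕ} [l.NeBot] (hl : l ≤ atTop) {p : H} (hp : TendstoWeakly x l p) :
    (∀ i ∈ I, T i p = p) ∧
      ∀ q, (∀ i ∈ I, T i q = q) → ∑ i ∈ I, (f i p + h i p) ≤ ∑ i ∈ I, (f i q + h i q) := by
  have hbdd := hrun.isBoundedRun hP hlip hT hy_bdd
  have hreg := hrun.isLittleO_x_succ_sub hP hbdd hf hh hg hlip hT
  obtain ⟨q₀, hq₀⟩ := hT_fix
  exact ⟨fun i hi => hrun.apply_eq_self_of_tendstoWeakly hP hbdd hreg hf hT hq₀ hf_lsc hl hp hi,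
    fun q hq => hrun.sum_le_sum_of_tendstoWeakly hP hbdd hreg hf hT hq hf_lsc hl hp hh hg hlip⟩

theorem alg2_weak_cluster_points_in_Omega
    {H : Type*} [NormedAddCommGroup H] [InnerProductSpace ℝ H] [CompleteSpace H]
    (M : ℕ) (hM : 1 ≤ M)
    (f h : ℕ → H → ℝ) (h' : ℕ → H → H) (L : ℕ → ℝ) (T : ℕ → H → H)
    (hf_cont : ∀ i ∈ Finset.Icc 1 M, Continuous (f i))
    (hf_conv : ∀ i ∈ Finset.Icc 1 M, ConvexOn ℝ Set.univ (f i))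
    (hh_conv : ∀ i ∈ Finset.Icc 1 M, ConvexOn ℝ Set.univ (h i))
    (hh_grad : ∀ i ∈ Finset.Icc 1 M, ∀ x : H, HasGradientAt (h i) (h' i x) x)
    (hL_pos : ∀ i ∈ Finset.Icc 1 M, 0 < L i)
    (hh_lip : ∀ i ∈ Finset.Icc 1 M, ∀ x y : H, ‖h' i x - h' i y‖ ≤ (1 / L i) * ‖x - y‖)
    (hT_firm : ∀ i ∈ Finset.Icc 1 M, ∀ x y : H,
      ‖T i x - T i y‖ ^ 2 ≤ @inner ℝ H _ (T i x - T i y) (x - y))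
    (S : Set H) (hS : S = ⋂ i ∈ Finset.Icc 1 M, {x : H | T i x = x}) (hS_ne : S.Nonempty)
    (θ lam β α : ℕ → ℝ) (σ : ℝ) (hσ : 1 ≤ σ)
    (hθ_range : ∀ n, 0 ≤ θ n ∧ θ n < 1)
    (hlam_pos : ∀ n, 0 < lam n)
    (hlam_le : ∀ n, ∀ i ∈ Finset.Icc 1 M, lam n ≤ 2 * L i)
    (hβ_range : ∀ n, 0 < β n ∧ β n ≤ 1)
    (hα_range : ∀ n, 0 < α n ∧ α n ≤ 1)
    (hθ_anti : Antitone θ) (hlam_anti : Antitone lam)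
    (hβ_anti : Antitone β) (hα_anti : Antitone α)
    (hθ_lim : Tendsto θ atTop (𝓝 0)) (hlam_lim : Tendsto lam atTop (𝓝 0))
    (hβ_lim : Tendsto β atTop (𝓝 0)) (hα_lim : Tendsto α atTop (𝓝 0))
    (hC1 : ¬ Summable α)
    (hC2 : Tendsto (fun n => (1 / α (n+1)) * |1 / lam (n+1) - 1 / lam n|) atTop (𝓝 0))
    (hC3 : Tendsto (fun n => (1 / lam (n+1)) * |1 - α n / α (n+1)|) atTop (𝓝 0))
    (hC4 : Tendsto (fun n => α n / lam n) atTop (𝓝 0))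
    (hC5 : Tendsto (fun n => θ n / (α (n+1) * lam (n+1))) atTop (𝓝 0))
    (hC6 : ∀ n, lam n / lam (n+1) ≤ σ)
    (hC7 : Tendsto (fun n => β n / α (n+1)) atTop (𝓝 0))
    (x z : ℕ → H) (w y d : ℕ → ℕ → H) (u : ℕ → H)
    (hd1 : ∀ i ∈ Finset.Icc 1 M, d 1 i = -(h' i (z 0)))
    (hz : ∀ n ≥ 1, z n = x n + θ n • (x n - x (n-1)))
    (hd : ∀ n ≥ 1, ∀ i ∈ Finset.Icc 1 M, d (n+1) i = -(h' i (z n)) + β n • d n i)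
    (hy : ∀ n ≥ 1, ∀ i ∈ Finset.Icc 1 M, ∀ v : H,
      f i (y n i) + (1 / (2 * lam n)) * ‖z n + lam n • d (n+1) i - y n i‖ ^ 2
        ≤ f i v + (1 / (2 * lam n)) * ‖z n + lam n • d (n+1) i - v‖ ^ 2)
    (hw : ∀ n ≥ 1, ∀ i ∈ Finset.Icc 1 M,
      w n (i+1) = α n • u i + (1 - α n) • T i (y n i))
    (hx : ∀ n ≥ 1, x (n+1) = (M : ℝ)⁻¹ • ∑ i ∈ Finset.Icc 1 M, w n (i+1))
    (hy_bdd : ∀ i ∈ Finset.Icc 1 M, ∃ C, ∀ n ≥ 1, ‖y n i‖ ≤ C)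
    (ψ : H → ℝ) (hψ : ∀ v : H, ψ v = ∑ i ∈ Finset.Icc 1 M, (f i v + h i v))
    (hΩ_ne : ∃ p ∈ S, ∀ v ∈ S, ψ p ≤ ψ v)
    : ∀ p : H,
      (∃ φ : ℕ → ℕ, StrictMono φ ∧
        ∀ q : H, Tendsto (fun k => @inner ℝ H _ (x (φ k)) q) atTop (𝓝 (@inner ℝ H _ p q))) →
      p ∈ S ∧ ∀ v ∈ S, ψ p ≤ ψ v := by
  have hP : AdmissibleParameters θ lam β α :=
    .of_tendsto_div hlam_pos hα_range hlam_lim hC1 hC2 hC3 hC4 hC5 hC7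
  have hrun : IsSplittingRun (Finset.Icc 1 M) f h' T u θ lam β α x z d y fun n i => w n (i + 1) :=
    ⟨hz, hd, hy, hw, by simpa using hx⟩
  have hlip : ∀ i ∈ Finset.Icc 1 M, LipschitzWith (1 / L i).toNNReal (h' i) := fun i hi =>
    .of_dist_le' fun a b => by simpa only [dist_eq_norm] using hh_lip i hi a b
  have hy_isBigO : ∀ i ∈ Finset.Icc 1 M, (fun n => y n i) =O[atTop] (1 : ℕ → ℝ) := fun i hi => by
    obtain ⟨C, hC⟩ := hy_bdd i hi
    exact .of_bound C (by filter_upwards [eventually_ge_atTop 1] with n hn; simpa using hC n hn)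
  have hS_mem (q : H) : q ∈ S ↔ ∀ i ∈ Finset.Icc 1 M, T i q = q := by simp [hS]
  rintro p ⟨φ, hφ, hp⟩
  simpa only [hS_mem, hψ] using alg2_weak_cluster_points_in_Omega_general hf_conv
    (fun i hi => (hf_cont i hi).lowerSemicontinuous) hh_conv hh_grad hlip
    (fun i hi => lipschitzWith_one_of_norm_sub_sq_le_inner (hT_firm i hi))
    (hS_ne.imp fun q => (hS_mem q).1) hP hrun hy_isBigO hφ.tendsto_atTop
    fun q => tendsto_map'_iff.2 (hp q)
end
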